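/- arXiv:2007.12225 — 3 statements merged into one kernel-verified Lean document; each statement's English description precedes it below -/
import Mathlib

section
/- (Proposition 1) Let W be a channel from 𝒳 to 𝒴, let g be a continuous decoding metric, let R > 0, and let Q_X be a pmf on 𝒳 with rational values; let N = { n ∈ ℕ : n·Q_X(a) ∈ ℕ for all a ∈ 𝒳 } (an infinite set). Then there exists, for each n ∈ N, a codebook C_n consisting of M_n = ⌈e^{nR}/2⌉ sequences in 𝒳^n, each with empirical pmf equal to Q_X, such that liminf over n ∈ N, n → ∞, of [ −(1/n) log max_{0 ≤ m < M_n} P_{e|m}(C_n) ] is at least E_ex~(R,Q_X). -/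
open Real BigOperators Filter

namespace EE

variable {𝒳 𝒴 : Type*} [Fintype 𝒳] [Fintype 𝒴]

/-- `p` is a probability mass function on a finite type. -/
def IsPMF {α : Type*} [Fintype α] (p : α → ℝ) : Prop :=
  (∀ a, 0 ≤ p a) ∧ ∑ a, p a = 1

/-- `p` is a strictly positive probability mass function on a finite type. -/
def IsPosPMF {α : Type*} [Fintype α] (p : α → ℝ) : Prop :=
  (∀ a, 0 < p a) ∧ ∑ a, p a = 1

/-- A channel from `𝒳` to `𝒴`: every row `W (·|x)` is a strictly positive pmf on `𝒴`. -/
def IsChannel (W : 𝒳 → 𝒴 → ℝ) : Prop := ∀ x, IsPosPMF (W x)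

/-- A joint pmf on `𝒳 × 𝒴`, in curried form. -/
def IsJointPMF (Q : 𝒳 → 𝒴 → ℝ) : Prop :=
  (∀ x y, 0 ≤ Q x y) ∧ ∑ x, ∑ y, Q x y = 1

/-- A joint pmf on `𝒳 × 𝒳 × 𝒴`, in curried form. -/
def IsJointPMF3 (Q : 𝒳 → 𝒳 → 𝒴 → ℝ) : Prop :=
  (∀ x x' y, 0 ≤ Q x x' y) ∧ ∑ x, ∑ x', ∑ y, Q x x' y = 1

/-- `𝒳`-marginal of a joint pmf. -/
def margX (Q : 𝒳 → 𝒴 → ℝ) : 𝒳 → ℝ := fun x => ∑ y, Q x y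

/-- `𝒴`-marginal of a joint pmf. -/
def margY (Q : 𝒳 → 𝒴 → ℝ) : 𝒴 → ℝ := fun y => ∑ x, Q x y

/-- Shannon entropy (natural logarithm, with the convention `0 log 0 = 0`,
which holds automatically since `Real.log 0 = 0`). -/
noncomputable def ent {α : Type*} [Fintype α] (p : α → ℝ) : ℝ :=
  -∑ a, p a * Real.log (p a)

/-- Mutual information `I_Q(X;Y)` of a joint pmf `Q` on `𝒳 × 𝒴`. -/
noncomputable def mutInf (Q : 𝒳 → 𝒴 → ℝ) : ℝ :=
  ∑ x, ∑ y, Q x y * Real.log (Q x y / (margX Q x * margY Q y))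

/-- Conditional entropy `H_Q(Y|X)` of a joint pmf `Q` on `𝒳 × 𝒴`. -/
noncomputable def condEntYX (Q : 𝒳 → 𝒴 → ℝ) : ℝ :=
  -∑ x, ∑ y, Q x y * Real.log (Q x y / margX Q x)

/-- Conditional entropy `H_Q(X|Y)` of a joint pmf `Q` on `𝒳 × 𝒴`. -/
noncomputable def condEntXY (Q : 𝒳 → 𝒴 → ℝ) : ℝ :=
  -∑ x, ∑ y, Q x y * Real.log (Q x y / margY Q y)

/-- The maximum-likelihood decoding metric `g_ML(Q) = ∑ Q(x,y) log W(y|x)`. -/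
noncomputable def gML (W : 𝒳 → 𝒴 → ℝ) (Q : 𝒳 → 𝒴 → ℝ) : ℝ :=
  ∑ x, ∑ y, Q x y * Real.log (W x y)

/-- The maximum mutual information decoding metric `g_MMI(Q) = I_Q(X;Y)`. -/
noncomputable def gMMI (Q : 𝒳 → 𝒴 → ℝ) : ℝ := mutInf Q

/-- The quantity `a_g(R, Q_Y)`: the maximum of `g(Q_{X̃Y})` over joint pmfs with
`𝒳`-marginal `Q_X`, `𝒴`-marginal `Q_Y` and `I_Q(X̃;Y) ≤ R`. -/
noncomputable def aFun (g : (𝒳 → 𝒴 → ℝ) → ℝ) (QX : 𝒳 → ℝ) (R : ℝ) (QY : 𝒴 → ℝ) : ℝ :=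
  sSup {v : ℝ | ∃ Q : 𝒳 → 𝒴 → ℝ, IsJointPMF Q ∧ margX Q = QX ∧ margY Q = QY ∧
    mutInf Q ≤ R ∧ v = g Q}

/-- Joint pmf on `𝒳 × 𝒳 × 𝒴` built from `Q_{XX'}` and a conditional pmf `Q_{Y|XX'}`. -/
def jointQ (QXX' : 𝒳 → 𝒳 → ℝ) (Qc : 𝒳 → 𝒳 → 𝒴 → ℝ) : 𝒳 → 𝒳 → 𝒴 → ℝ :=
  fun x x' y => QXX' x x' * Qc x x' y

/-- Marginal `Q_{XY}` of a joint pmf on `𝒳 × 𝒳 × 𝒴`. -/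
def margXY3 (Q : 𝒳 → 𝒳 → 𝒴 → ℝ) : 𝒳 → 𝒴 → ℝ := fun x y => ∑ x', Q x x' y

/-- Marginal `Q_{X'Y}` of a joint pmf on `𝒳 × 𝒳 × 𝒴`. -/
def margX'Y3 (Q : 𝒳 → 𝒳 → 𝒴 → ℝ) : 𝒳 → 𝒴 → ℝ := fun x' y => ∑ x, Q x x' y

/-- Marginal `Q_Y` of a joint pmf on `𝒳 × 𝒳 × 𝒴`. -/
def margY3 (Q : 𝒳 → 𝒳 → 𝒴 → ℝ) : 𝒴 → ℝ := fun y => ∑ x, ∑ x', Q x x' y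

/-- Conditional entropy `H_Q(Y|X,X')` of a joint pmf on `𝒳 × 𝒳 × 𝒴`. -/
noncomputable def condEntY3 (Q : 𝒳 → 𝒳 → 𝒴 → ℝ) : ℝ :=
  -∑ x, ∑ x', ∑ y, Q x x' y * Real.log (Q x x' y / ∑ y', Q x x' y')

/-- The objective `−E_Q[log W(Y|X)] − H_Q(Y|X,X')`. -/
noncomputable def obj (W : 𝒳 → 𝒴 → ℝ) (Q : 𝒳 → 𝒳 → 𝒴 → ℝ) : ℝ :=
  (-∑ x, ∑ x', ∑ y, Q x x' y * Real.log (W x y)) - condEntY3 Q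

/-- `Γ_g(Q_{XX'}, R)`: the infimum of `−E_Q[log W(Y|X)] − H_Q(Y|X,X')` over conditional
pmfs `Q_{Y|XX'}` satisfying `g(Q_{X'Y}) ≥ max (g(Q_{XY})) (a_g(R,Q_Y))`, as an
extended real, with `inf ∅ = +∞`. -/
noncomputable def Gamma (W : 𝒳 → 𝒴 → ℝ) (g : (𝒳 → 𝒴 → ℝ) → ℝ) (QX : 𝒳 → ℝ)
    (R : ℝ) (QXX' : 𝒳 → 𝒳 → ℝ) : EReal :=
  sInf {v : EReal | ∃ Qc : 𝒳 → 𝒳 → 𝒴 → ℝ, (∀ x x', IsPMF (Qc x x')) ∧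
    max (g (margXY3 (jointQ QXX' Qc))) (aFun g QX R (margY3 (jointQ QXX' Qc)))
      ≤ g (margX'Y3 (jointQ QXX' Qc)) ∧
    v = ((obj W (jointQ QXX' Qc) : ℝ) : EReal)}

/-- The single-letter TRC exponent `E_trc^g(R, Q_X)`. -/
noncomputable def Etrc (W : 𝒳 → 𝒴 → ℝ) (g : (𝒳 → 𝒴 → ℝ) → ℝ) (QX : 𝒳 → ℝ)
    (R : ℝ) : EReal :=
  sInf {v : EReal | ∃ QXX' : 𝒳 → 𝒳 → ℝ, IsJointPMF QXX' ∧ margX QXX' = QX ∧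
    margY QXX' = QX ∧ mutInf QXX' ≤ 2 * R ∧
    v = Gamma W g QX R QXX' + ((mutInf QXX' : ℝ) : EReal) - ((R : ℝ) : EReal)}

/-- The single-letter expurgated exponent `E_ex^g(R, Q_X)`. -/
noncomputable def Eex (W : 𝒳 → 𝒴 → ℝ) (g : (𝒳 → 𝒴 → ℝ) → ℝ) (QX : 𝒳 → ℝ)
    (R : ℝ) : EReal :=
  sInf {v : EReal | ∃ QXX' : 𝒳 → 𝒳 → ℝ, IsJointPMF QXX' ∧ margX QXX' = QX ∧
    margY QXX' = QX ∧ mutInf QXX' ≤ R ∧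
    v = Gamma W g QX R QXX' + ((mutInf QXX' : ℝ) : EReal) - ((R : ℝ) : EReal)}

/-- `Λ(Q_{XX'})`. -/
noncomputable def Lambda (W : 𝒳 → 𝒴 → ℝ) (QXX' : 𝒳 → 𝒳 → ℝ) : EReal :=
  ⨆ μ : {μ : ℝ // 0 ≤ μ}, ⨅ Qc : {Qc : 𝒳 → 𝒳 → 𝒴 → ℝ // ∀ x x', IsPMF (Qc x x')},
    ((obj W (jointQ QXX' Qc.1) + μ.1 * (mutInf (margXY3 (jointQ QXX' Qc.1)) -
      mutInf (margX'Y3 (jointQ QXX' Qc.1))) : ℝ) : EReal)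

/-- `Φ(Q_{XX'}, R)`. -/
noncomputable def Phi (W : 𝒳 → 𝒴 → ℝ) (QXX' : 𝒳 → 𝒳 → ℝ) (R : ℝ) : EReal :=
  ⨆ μ : {μ : ℝ // 0 ≤ μ}, ⨅ Qc : {Qc : 𝒳 → 𝒳 → 𝒴 → ℝ // ∀ x x', IsPMF (Qc x x')},
    ((obj W (jointQ QXX' Qc.1) + μ.1 * (R - mutInf (margX'Y3 (jointQ QXX' Qc.1))) : ℝ) : EReal)

/-- `Ψ(Q_{XX'})`. -/
noncomputable def Psi (W : 𝒳 → 𝒴 → ℝ) (QXX' : 𝒳 → 𝒳 → ℝ) : EReal :=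
  ⨆ s : {s : ℝ // 0 ≤ s},
    ((-∑ x, ∑ x', QXX' x x' * Real.log (∑ y, W x y ^ (1 - s.1) * W x' y ^ s.1) : ℝ) : EReal)

/-- `G(y, σ, τ, V)`. -/
noncomputable def Gfun (W : 𝒳 → 𝒴 → ℝ) (QX : 𝒳 → ℝ) (y : 𝒴) (σ τ : ℝ)
    (V : 𝒳 → ℝ) : ℝ :=
  (∑ x, W x y ^ (1 / σ) * QX x ^ (τ / σ) * V x ^ (-(τ / σ))) ^ σ

/-- `Θ(Q_{XX'}, R)`. -/
noncomputable def Theta (W : 𝒳 → 𝒴 → ℝ) (QX : 𝒳 → ℝ) (QXX' : 𝒳 → 𝒳 → ℝ)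
    (R : ℝ) : EReal :=
  ⨆ ρ : {ρ : ℝ // 0 ≤ ρ}, ⨅ σ : {σ : ℝ // 0 < σ}, ⨅ τ : {τ : ℝ // 0 ≤ τ},
    ⨅ V : {V : 𝒳 → ℝ // IsPosPMF V},
    ((ρ.1 * σ.1 * (R - ent QX) - ∑ x, ∑ x', QXX' x x' *
      Real.log (∑ y, W x y * W x' y ^ ρ.1 * Gfun W QX y σ.1 τ.1 V.1 ^ (-ρ.1)) : ℝ) : EReal)


/-- Empirical pmf of a length-`n` sequence. -/
noncomputable def empPMF {𝒳 : Type*} [Fintype 𝒳] [DecidableEq 𝒳] {n : ℕ}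
    (x : Fin n → 𝒳) : 𝒳 → ℝ :=
  fun a => ((Finset.univ.filter (fun i => x i = a)).card : ℝ) / n

/-- Joint empirical pmf of a pair of length-`n` sequences. -/
noncomputable def empJoint {𝒳 𝒴 : Type*} [Fintype 𝒳] [Fintype 𝒴]
    [DecidableEq 𝒳] [DecidableEq 𝒴] {n : ℕ}
    (x : Fin n → 𝒳) (y : Fin n → 𝒴) : 𝒳 → 𝒴 → ℝ :=
  fun a b => ((Finset.univ.filter (fun i => x i = a ∧ y i = b)).card : ℝ) / n

/-- Error probability of message `m` of the generalized likelihood decoder with metric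
`g`, for the codebook `C` over the memoryless channel `W`. -/
noncomputable def Perr {𝒳 𝒴 : Type*} [Fintype 𝒳] [Fintype 𝒴]
    [DecidableEq 𝒳] [DecidableEq 𝒴]
    (W : 𝒳 → 𝒴 → ℝ) (g : (𝒳 → 𝒴 → ℝ) → ℝ) {n M : ℕ}
    (C : Fin M → Fin n → 𝒳) (m : Fin M) : ℝ :=
  ∑ m' ∈ Finset.univ.filter (fun m' => m' ≠ m), ∑ y : Fin n → 𝒴,
    (∏ i, W (C m i) (y i)) * Real.exp ((n : ℝ) * g (empJoint (C m') y)) /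
      (∑ mt, Real.exp ((n : ℝ) * g (empJoint (C mt) y)))

/-- The quantity `α(R, Q_Y)`. -/
noncomputable def alphaFun {𝒳 𝒴 : Type*} [Fintype 𝒳] [Fintype 𝒴]
    (g : (𝒳 → 𝒴 → ℝ) → ℝ) (QX : 𝒳 → ℝ) (R : ℝ) (QY : 𝒴 → ℝ) : ℝ :=
  sSup {v : ℝ | ∃ Q : 𝒳 → 𝒴 → ℝ, IsJointPMF Q ∧ margX Q = QX ∧ margY Q = QY ∧
    mutInf Q ≤ R ∧ v = g Q - mutInf Q + R}

/-- The quantity `Γ̃(Q_{XX'}, R)`: the minimum, over all conditional pmfs `Q_{Y|XX'}`, of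
`−E_Q[log W(Y|X)] − H_Q(Y|X,X') + [max {g(Q_{XY}), α(R,Q_Y)} − g(Q_{X'Y})]₊`. -/
noncomputable def GammaTilde {𝒳 𝒴 : Type*} [Fintype 𝒳] [Fintype 𝒴]
    (W : 𝒳 → 𝒴 → ℝ) (g : (𝒳 → 𝒴 → ℝ) → ℝ) (QX : 𝒳 → ℝ) (R : ℝ)
    (QXX' : 𝒳 → 𝒳 → ℝ) : EReal :=
  sInf {v : EReal | ∃ Qc : 𝒳 → 𝒳 → 𝒴 → ℝ, (∀ x x', IsPMF (Qc x x')) ∧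
    v = ((obj W (jointQ QXX' Qc)
      + max (max (g (margXY3 (jointQ QXX' Qc)))
            (alphaFun g QX R (margY3 (jointQ QXX' Qc)))
          - g (margX'Y3 (jointQ QXX' Qc))) 0 : ℝ) : EReal)}

/-- The expurgated exponent `Ẽ_ex(R, Q_X)` of Proposition 1. -/
noncomputable def EexTilde {𝒳 𝒴 : Type*} [Fintype 𝒳] [Fintype 𝒴]
    (W : 𝒳 → 𝒴 → ℝ) (g : (𝒳 → 𝒴 → ℝ) → ℝ) (QX : 𝒳 → ℝ) (R : ℝ) : EReal :=
  sInf {v : EReal | ∃ QXX' : 𝒳 → 𝒳 → ℝ, IsJointPMF QXX' ∧ margX QXX' = QX ∧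
    margY QXX' = QX ∧ mutInf QXX' ≤ R ∧
    v = GammaTilde W g QX R QXX' + ((mutInf QXX' : ℝ) : EReal) - ((R : ℝ) : EReal)}

/-- The codebook size `M_n = ⌈e^{nR}/2⌉`. -/
noncomputable def Mn (R : ℝ) (n : ℕ) : ℕ := ⌈Real.exp ((n : ℝ) * R) / 2⌉₊

/-! Draw `2M` codewords, `M = ⌈e^{nR}/2⌉`, independently and uniformly from the type class of `Q_X`.
With positive probability two things hold at once. By a Chernoff bound, every joint type of a
channel output with `Q_X` and mutual information at most `R - ε` occurs about as often as expected,
so the denominator of the decoder is at least `e^{n(α(R, P̂_y) - 2η)}` for every output `y`. By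
Markov's inequality, the sum over ordered pairs of codewords of `e^{n I(x_m; x_{m'})}` is at most
`M e^{n(R + o(1))}`, so that half of the codewords can be expurgated to leave only messages `m`
with `∑_{m'} e^{n I(x_m; x_{m'})} ≤ e^{n(R + o(1))}`. For such an `m` all the empirical mutual
informations `I(x_m; x_{m'})` are at most `R + o(1)`, and by the method of types the pair `(m, m')`
contributes at most `e^{-n(Γ̃ - o(1))}` to the error probability, which gives `Ẽ_ex - o(1)` as
exponent of the sum. Moving a joint pmf slightly towards the product of its marginals decreases its
mutual information by a definite amount, and uniform continuity bounds the resulting change of the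
exponents; this absorbs the slacks `±ε` in the constraints on the mutual information. A code of
minimal error probability for each `n` is good for all exponents below `Ẽ_ex` simultaneously. -/

open scoped Topology


section Simplex

variable {ι A B : Type*} [Fintype ι] [Fintype A] [Fintype B]

lemma IsPMF.le_one {p : ι → ℝ} (hp : IsPMF p) (a : ι) : p a ≤ 1 :=
  hp.2 ▸ Finset.single_le_sum (fun b _ => hp.1 b) (Finset.mem_univ a)

lemma IsPMF.convexCombo {p q : ι → ℝ} (hp : IsPMF p) (hq : IsPMF q) {t : ℝ} (ht₀ : 0 ≤ t)
    (ht₁ : t ≤ 1) : IsPMF fun a => (1 - t) * p a + t * q a :=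
  convex_stdSimplex ℝ ι hp hq (sub_nonneg.2 ht₁) ht₀ (sub_add_cancel 1 t)

lemma IsPMF.abs_convexCombo_sub_le {p q : ι → ℝ} (hp : IsPMF p) (hq : IsPMF q) {t : ℝ}
    (ht₀ : 0 ≤ t) (a : ι) : |(1 - t) * p a + t * q a - p a| ≤ t := by
  have hdiff : |q a - p a| ≤ 1 :=
    abs_sub_le_iff.2 ⟨by linarith [hp.1 a, hq.le_one a], by linarith [hq.1 a, hp.le_one a]⟩
  calc |(1 - t) * p a + t * q a - p a| = t * |q a - p a| := by
        rw [show (1 - t) * p a + t * q a - p a = t * (q a - p a) by ring, abs_mul,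
          abs_of_nonneg ht₀]
    _ ≤ t := mul_le_of_le_one_right ht₀ hdiff

lemma isPMF_uncurry_iff {Q : A → B → ℝ} : IsPMF (Function.uncurry Q) ↔ IsJointPMF Q := by
  simp [IsPMF, IsJointPMF, Fintype.sum_prod_type]

lemma isJointPMF_uncurry_iff {Q : A → A → B → ℝ} :
    IsJointPMF (Function.uncurry Q) ↔ IsJointPMF3 Q := by
  simp [IsJointPMF, IsJointPMF3, Fintype.sum_prod_type]

lemma isPMF_uncurry_uncurry_iff {Q : A → A → B → ℝ} :
    IsPMF (Function.uncurry (Function.uncurry Q)) ↔ IsJointPMF3 Q :=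
  isPMF_uncurry_iff.trans isJointPMF_uncurry_iff

lemma IsJointPMF.isPMF_margX {Q : A → B → ℝ} (hQ : IsJointPMF Q) : IsPMF (margX Q) :=
  ⟨fun a => Finset.sum_nonneg fun b _ => hQ.1 a b, hQ.2⟩

lemma IsJointPMF.isPMF_margY {Q : A → B → ℝ} (hQ : IsJointPMF Q) : IsPMF (margY Q) :=
  ⟨fun b => Finset.sum_nonneg fun a _ => hQ.1 a b, Finset.sum_comm.trans hQ.2⟩

lemma isCompact_setOf_isJointPMF : IsCompact {Q : A → B → ℝ | IsJointPMF Q} := by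
  have himage : {Q : A → B → ℝ | IsJointPMF Q} = Function.curry '' stdSimplex ℝ (A × B) := by
    ext Q
    refine ⟨fun hQ => ⟨_, isPMF_uncurry_iff.2 hQ, Function.curry_uncurry Q⟩, ?_⟩
    rintro ⟨p, hp, rfl⟩
    exact isPMF_uncurry_iff.1 (by rwa [Function.uncurry_curry])
  rw [himage]
  exact (isCompact_stdSimplex ℝ (A × B)).image (by unfold Function.curry; fun_prop)

lemma isCompact_setOf_isJointPMF3 : IsCompact {Q : A → A → B → ℝ | IsJointPMF3 Q} := by
  have himage : {Q : A → A → B → ℝ | IsJointPMF3 Q}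
      = Function.curry '' {P : A × A → B → ℝ | IsJointPMF P} := by
    ext Q
    refine ⟨fun hQ => ⟨_, isJointPMF_uncurry_iff.2 hQ, Function.curry_uncurry Q⟩, ?_⟩
    rintro ⟨P, hP, rfl⟩
    exact isJointPMF_uncurry_iff.1 (by rwa [Function.uncurry_curry])
  rw [himage]
  exact isCompact_setOf_isJointPMF.image (by unfold Function.curry; fun_prop)

lemma eventually_abs_sub_le_of_isCompact {α : Type*} [PseudoMetricSpace α] {s : Set α}
    (hs : IsCompact s) {f : α → ℝ} (hf : ContinuousOn f s) {η : ℝ} (hη : 0 < η) :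
    ∀ᶠ δ in 𝓝[>] (0 : ℝ), ∀ x ∈ s, ∀ y ∈ s, dist x y ≤ δ → |f x - f y| ≤ η := by
  obtain ⟨δ₀, hδ₀, hf⟩ :=
    Metric.uniformContinuousOn_iff.1 (hs.uniformContinuousOn_of_continuous hf) η hη
  filter_upwards [Ioo_mem_nhdsGT hδ₀] with δ hδ x hx y hy hxy
  exact (hf x hx y hy (hxy.trans_lt hδ.2)).le

end Simplex

section Entropy

variable {ι A B : Type*} [Fintype ι] [Fintype A] [Fintype B]

lemma ent_eq_sum_negMulLog (p : ι → ℝ) : ent p = ∑ a, Real.negMulLog (p a) := by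
  simp [ent, Real.negMulLog]

lemma continuous_ent : Continuous (ent : (ι → ℝ) → ℝ) := by
  simp only [funext ent_eq_sum_negMulLog]
  fun_prop

lemma concaveOn_ent : ConcaveOn ℝ (Set.Ici (0 : ι → ℝ)) ent := by
  refine ⟨convex_Ici 0, fun p hp q hq s t hs ht hst => ?_⟩
  simp only [ent_eq_sum_negMulLog, smul_eq_mul, Finset.mul_sum, ← Finset.sum_add_distrib]
  exact Finset.sum_le_sum fun a _ => Real.concaveOn_negMulLog.2 (hp a) (hq a) hs ht hst

lemma ent_mul_prod {p : A → ℝ} {q : B → ℝ} (hp : ∑ a, p a = 1) (hq : ∑ b, q b = 1) :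
    ent (fun z : A × B => p z.1 * q z.2) = ent p + ent q := by
  simp only [ent_eq_sum_negMulLog, Fintype.sum_prod_type, Real.negMulLog_mul,
    Finset.sum_add_distrib, ← Finset.sum_mul, ← Finset.mul_sum, hp, hq, one_mul]

lemma mutInf_eq_ent_add_ent_sub_ent {Q : A → B → ℝ} (hQ : ∀ a b, 0 ≤ Q a b) :
    mutInf Q = ent (margX Q) + ent (margY Q) - ent (Function.uncurry Q) := by
  have hlog : ∀ a b, Q a b * Real.log (Q a b / (margX Q a * margY Q b))
      = Q a b * Real.log (Q a b) - Q a b * Real.log (margX Q a)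
        - Q a b * Real.log (margY Q b) := by
    intro a b
    rcases (hQ a b).eq_or_lt with h0 | hpos
    · simp [← h0]
    have hX : 0 < margX Q a :=
      hpos.trans_le (Finset.single_le_sum (fun b _ => hQ a b) (Finset.mem_univ b))
    have hY : 0 < margY Q b :=
      hpos.trans_le (Finset.single_le_sum (fun a _ => hQ a b) (Finset.mem_univ a))
    rw [Real.log_div hpos.ne' (by positivity), Real.log_mul hX.ne' hY.ne']
    ring
  have hentX : ∑ a, ∑ b, Q a b * Real.log (margX Q a) = -ent (margX Q) := by
    simp only [← Finset.sum_mul, ent, neg_neg, margX]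
  have hentY : ∑ a, ∑ b, Q a b * Real.log (margY Q b) = -ent (margY Q) := by
    rw [Finset.sum_comm]
    simp only [← Finset.sum_mul, ent, neg_neg, margY]
  have hentXY : ∑ a, ∑ b, Q a b * Real.log (Q a b) = -ent (Function.uncurry Q) := by
    simp only [ent, neg_neg, Function.uncurry, Fintype.sum_prod_type]
  simp only [mutInf, hlog, Finset.sum_sub_distrib, hentX, hentY, hentXY]
  ring

lemma continuousOn_mutInf : ContinuousOn (mutInf : (A → B → ℝ) → ℝ) {Q | IsJointPMF Q} := by
  have hX : Continuous fun Q : A → B → ℝ => margX Q := by unfold margX; fun_prop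
  have hY : Continuous fun Q : A → B → ℝ => margY Q := by unfold margY; fun_prop
  have hXY : Continuous fun Q : A → B → ℝ => Function.uncurry Q := by
    unfold Function.uncurry; fun_prop
  refine ContinuousOn.congr (Continuous.continuousOn ?_)
    fun Q hQ => mutInf_eq_ent_add_ent_sub_ent hQ.1
  exact ((continuous_ent.comp hX).add (continuous_ent.comp hY)).sub (continuous_ent.comp hXY)

lemma mutInf_comm (Q : A → B → ℝ) : mutInf (fun b a => Q a b) = mutInf Q := by
  simp only [mutInf]
  rw [Finset.sum_comm]
  simp only [margX, margY, mul_comm]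

end Entropy

section Mixing

lemma margX_mul {A B : Type*} [Fintype B] (p : A → ℝ) {q : B → ℝ} (hq : ∑ b, q b = 1) :
    margX (fun a b => p a * q b) = p := by
  funext a
  simp only [margX, ← Finset.mul_sum, hq, mul_one]

lemma margY_mul {A B : Type*} [Fintype A] {p : A → ℝ} (q : B → ℝ) (hp : ∑ a, p a = 1) :
    margY (fun a b => p a * q b) = q := by
  funext b
  simp only [margY, ← Finset.sum_mul, hp, one_mul]

variable {A B : Type*} [Fintype A] [Fintype B]

/-- The convex combination `(1 - t) Q + t (Q_X × Q_Y)` of a joint pmf with the product of its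
marginals: it has the marginals of `Q` but smaller mutual information. -/
def mixMarg (t : ℝ) (Q : A → B → ℝ) : A → B → ℝ :=
  fun a b => (1 - t) * Q a b + t * (margX Q a * margY Q b)

lemma IsPMF.isJointPMF_mul {p : A → ℝ} {q : B → ℝ} (hp : IsPMF p) (hq : IsPMF q) :
    IsJointPMF fun a b => p a * q b :=
  ⟨fun a b => mul_nonneg (hp.1 a) (hq.1 b), by simp [← Finset.mul_sum, hp.2, hq.2]⟩

lemma IsPMF.mutInf_mul {p : A → ℝ} {q : B → ℝ} (hp : IsPMF p) (hq : IsPMF q) :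
    mutInf (fun a b => p a * q b) = 0 := by
  rw [mutInf_eq_ent_add_ent_sub_ent (hp.isJointPMF_mul hq).1, margX_mul p hq.2, margY_mul q hp.2,
    ← ent_mul_prod hp.2 hq.2]
  exact sub_self _

variable {Q : A → B → ℝ} {t : ℝ}

lemma IsJointPMF.margX_mixMarg (hQ : IsJointPMF Q) (t : ℝ) : margX (mixMarg t Q) = margX Q := by
  funext a
  have h := congrFun (margX_mul (margX Q) hQ.isPMF_margY.2) a
  simp only [margX] at h
  simp only [margX, mixMarg, Finset.sum_add_distrib, ← Finset.mul_sum _ _ (1 - t),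
    ← Finset.mul_sum _ _ t, h]
  ring

lemma IsJointPMF.margY_mixMarg (hQ : IsJointPMF Q) (t : ℝ) : margY (mixMarg t Q) = margY Q := by
  funext b
  have h := congrFun (margY_mul (margY Q) hQ.isPMF_margX.2) b
  simp only [margY] at h
  simp only [margY, mixMarg, Finset.sum_add_distrib, ← Finset.mul_sum _ _ (1 - t),
    ← Finset.mul_sum _ _ t, h]
  ring

lemma IsJointPMF.isJointPMF_mixMarg (hQ : IsJointPMF Q) (ht₀ : 0 ≤ t) (ht₁ : t ≤ 1) :
    IsJointPMF (mixMarg t Q) :=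
  isPMF_uncurry_iff.1 <| (isPMF_uncurry_iff.2 hQ).convexCombo
    (isPMF_uncurry_iff.2 (hQ.isPMF_margX.isJointPMF_mul hQ.isPMF_margY)) ht₀ ht₁

lemma IsJointPMF.dist_mixMarg_le (hQ : IsJointPMF Q) (ht₀ : 0 ≤ t) :
    dist (mixMarg t Q) Q ≤ t := by
  refine (dist_pi_le_iff ht₀).2 fun a => (dist_pi_le_iff ht₀).2 fun b => ?_
  exact (isPMF_uncurry_iff.2 hQ).abs_convexCombo_sub_le
    (isPMF_uncurry_iff.2 (hQ.isPMF_margX.isJointPMF_mul hQ.isPMF_margY)) ht₀ (a, b)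

lemma IsJointPMF.mutInf_mixMarg_le (hQ : IsJointPMF Q) (ht₀ : 0 ≤ t) (ht₁ : t ≤ 1) :
    mutInf (mixMarg t Q) ≤ (1 - t) * mutInf Q := by
  have hP := hQ.isPMF_margX.isJointPMF_mul hQ.isPMF_margY
  have hconc : (1 - t) * ent (Function.uncurry Q)
        + t * ent (fun z : A × B => margX Q z.1 * margY Q z.2)
      ≤ ent (Function.uncurry (mixMarg t Q)) :=
    concaveOn_ent.2 (isPMF_uncurry_iff.2 hQ).1 (isPMF_uncurry_iff.2 hP).1 (sub_nonneg.2 ht₁) ht₀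
      (sub_add_cancel 1 t)
  rw [ent_mul_prod hQ.isPMF_margX.2 hQ.isPMF_margY.2] at hconc
  rw [mutInf_eq_ent_add_ent_sub_ent (hQ.isJointPMF_mixMarg ht₀ ht₁).1,
    mutInf_eq_ent_add_ent_sub_ent hQ.1, hQ.margX_mixMarg, hQ.margY_mixMarg]
  linarith

lemma eventually_abs_sub_mixMarg_le {f : (A → B → ℝ) → ℝ}
    (hf : ContinuousOn f {Q | IsJointPMF Q}) {η : ℝ} (hη : 0 < η) :
    ∀ᶠ t in 𝓝[>] (0 : ℝ), ∀ Q, IsJointPMF Q → |f (mixMarg t Q) - f Q| ≤ η := by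
  filter_upwards [eventually_abs_sub_le_of_isCompact isCompact_setOf_isJointPMF hf hη,
    Ioo_mem_nhdsGT one_pos] with t hclose ht Q hQ
  exact hclose _ (hQ.isJointPMF_mixMarg ht.1.le ht.2.le) Q hQ (hQ.dist_mixMarg_le ht.1.le)

end Mixing

section TripleMarginals

variable {A B : Type*} [Fintype A] [Fintype B] {Q : A → A → B → ℝ} {t : ℝ}

/-- The marginal `Q_{XX'}` of a joint pmf on `𝒳 × 𝒳 × 𝒴`. -/
def margXX3 {A B : Type*} [Fintype B] (Q : A → A → B → ℝ) : A → A → ℝ :=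
  fun a a' => ∑ b, Q a a' b

lemma IsJointPMF3.isJointPMF_margXX3 (hQ : IsJointPMF3 Q) : IsJointPMF (margXX3 Q) :=
  ⟨fun a a' => Finset.sum_nonneg fun b _ => hQ.1 a a' b, hQ.2⟩

lemma IsJointPMF3.isJointPMF_margXY3 (hQ : IsJointPMF3 Q) : IsJointPMF (margXY3 Q) :=
  ⟨fun a b => Finset.sum_nonneg fun a' _ => hQ.1 a a' b,
    (Finset.sum_congr rfl fun _ _ => Finset.sum_comm).trans hQ.2⟩

lemma IsJointPMF3.isJointPMF_margX'Y3 (hQ : IsJointPMF3 Q) : IsJointPMF (margX'Y3 Q) :=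
  ⟨fun a' b => Finset.sum_nonneg fun a _ => hQ.1 a a' b,
    ((Finset.sum_congr rfl fun _ _ => Finset.sum_comm).trans Finset.sum_comm).trans hQ.2⟩

lemma IsJointPMF3.isPMF_margY3 (hQ : IsJointPMF3 Q) : IsPMF (margY3 Q) :=
  hQ.isJointPMF_margXY3.isPMF_margY

/-- The convex combination `(1 - t) Q + t (Q_X × Q_X' × Q_Y)` of a joint pmf on `𝒳 × 𝒳 × 𝒴` with
the product of its one-dimensional marginals. -/
def mixMarg3 (t : ℝ) (Q : A → A → B → ℝ) : A → A → B → ℝ :=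
  fun a a' b =>
    (1 - t) * Q a a' b + t * (margX (margXX3 Q) a * margY (margXX3 Q) a' * margY3 Q b)

lemma IsJointPMF3.isPMF_mul_marg (hQ : IsJointPMF3 Q) :
    IsPMF fun z : (A × A) × B =>
      margX (margXX3 Q) z.1.1 * margY (margXX3 Q) z.1.2 * margY3 Q z.2 := by
  have hXX := hQ.isJointPMF_margXX3
  exact isPMF_uncurry_iff.2 <|
    (isPMF_uncurry_iff.2 (hXX.isPMF_margX.isJointPMF_mul hXX.isPMF_margY)).isJointPMF_mul
      hQ.isPMF_margY3

lemma IsJointPMF3.isJointPMF3_mixMarg3 (hQ : IsJointPMF3 Q) (ht₀ : 0 ≤ t) (ht₁ : t ≤ 1) :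
    IsJointPMF3 (mixMarg3 t Q) :=
  isPMF_uncurry_uncurry_iff.1 <|
    (isPMF_uncurry_uncurry_iff.2 hQ).convexCombo hQ.isPMF_mul_marg ht₀ ht₁

lemma IsJointPMF3.dist_mixMarg3_le (hQ : IsJointPMF3 Q) (ht₀ : 0 ≤ t) :
    dist (mixMarg3 t Q) Q ≤ t := by
  simp only [dist_pi_le_iff ht₀]
  exact fun a a' b => (isPMF_uncurry_uncurry_iff.2 hQ).abs_convexCombo_sub_le
    hQ.isPMF_mul_marg ht₀ ((a, a'), b)

lemma IsJointPMF3.margXX3_mixMarg3 (hQ : IsJointPMF3 Q) (t : ℝ) :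
    margXX3 (mixMarg3 t Q) = mixMarg t (margXX3 Q) := by
  funext a a'
  simp only [margXX3, mixMarg3, mixMarg, Finset.sum_add_distrib, ← Finset.mul_sum,
    hQ.isPMF_margY3.2, mul_one]

lemma IsJointPMF3.margY3_mixMarg3 (hQ : IsJointPMF3 Q) (t : ℝ) :
    margY3 (mixMarg3 t Q) = margY3 Q := by
  funext b
  have hXX := hQ.isJointPMF_margXX3
  have hprod : ∑ a, ∑ a', margX (margXX3 Q) a * margY (margXX3 Q) a' * margY3 Q b
      = margY3 Q b := by
    simp only [← Finset.sum_mul, ← Finset.mul_sum, hXX.isPMF_margX.2, hXX.isPMF_margY.2, one_mul,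
      mul_one]
  calc margY3 (mixMarg3 t Q) b
      = (1 - t) * margY3 Q b
        + t * ∑ a, ∑ a', margX (margXX3 Q) a * margY (margXX3 Q) a' * margY3 Q b := by
        simp only [margY3, mixMarg3, Finset.sum_add_distrib, Finset.mul_sum]
    _ = margY3 Q b := by rw [hprod]; ring

lemma eventually_abs_sub_mixMarg3_le {f : (A → A → B → ℝ) → ℝ}
    (hf : ContinuousOn f {Q | IsJointPMF3 Q}) {η : ℝ} (hη : 0 < η) :
    ∀ᶠ t in 𝓝[>] (0 : ℝ), ∀ Q, IsJointPMF3 Q → |f (mixMarg3 t Q) - f Q| ≤ η := by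
  filter_upwards [eventually_abs_sub_le_of_isCompact isCompact_setOf_isJointPMF3 hf hη,
    Ioo_mem_nhdsGT one_pos] with t hclose ht Q hQ
  exact hclose _ (hQ.isJointPMF3_mixMarg3 ht.1.le ht.2.le) Q hQ (hQ.dist_mixMarg3_le ht.1.le)

end TripleMarginals

section Exponent

variable {A B : Type*} [Fintype A] [Fintype B] {W : A → B → ℝ} {g : (A → B → ℝ) → ℝ}
  {Q : A → A → B → ℝ}

lemma obj_eq_sub_ent (W : A → B → ℝ) (hQ : ∀ a a' b, 0 ≤ Q a a' b) :
    obj W Q = -gML W (margXY3 Q)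
      - (ent (Function.uncurry (Function.uncurry Q)) - ent (Function.uncurry (margXX3 Q))) := by
  have hlog : ∀ a a' b, Q a a' b * Real.log (Q a a' b / ∑ b', Q a a' b')
      = Q a a' b * Real.log (Q a a' b) - Q a a' b * Real.log (∑ b', Q a a' b') := by
    intro a a' b
    rcases (hQ a a' b).eq_or_lt with h0 | hpos
    · simp [← h0]
    have hsum : 0 < ∑ b', Q a a' b' :=
      hpos.trans_le (Finset.single_le_sum (fun b _ => hQ a a' b) (Finset.mem_univ b))
    rw [Real.log_div hpos.ne' hsum.ne']
    ring
  have hgML : gML W (margXY3 Q) = ∑ a, ∑ a', ∑ b, Q a a' b * Real.log (W a b) := by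
    simp only [gML, margXY3, Finset.sum_mul]
    exact Finset.sum_congr rfl fun a _ => Finset.sum_comm
  simp only [obj, hgML, condEntY3, hlog, Finset.sum_sub_distrib, ← Finset.sum_mul, ent, margXX3,
    Function.uncurry, Fintype.sum_prod_type]
  ring

lemma continuous_margXX3 {A B : Type*} [Fintype B] :
    Continuous (margXX3 : (A → A → B → ℝ) → A → A → ℝ) := by
  unfold margXX3; fun_prop

lemma continuousOn_obj (W : A → B → ℝ) : ContinuousOn (obj W) {Q | IsJointPMF3 Q} := by
  have hjoint : Continuous fun Q : A → A → B → ℝ => Function.uncurry (Function.uncurry Q) := by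
    unfold Function.uncurry; fun_prop
  have hpair : Continuous fun Q : A → A → B → ℝ => Function.uncurry (margXX3 Q) := by
    unfold Function.uncurry margXX3; fun_prop
  refine ContinuousOn.congr (Continuous.continuousOn ?_) fun Q hQ => obj_eq_sub_ent W hQ.1
  exact Continuous.sub (by unfold gML margXY3; fun_prop)
    ((continuous_ent.comp hjoint).sub (continuous_ent.comp hpair))

/-- The functional minimized in `GammaTilde`, with a real parameter `a` in place of
`α(R, Q_Y)`. -/
noncomputable def penalizedObj (W : A → B → ℝ) (g : (A → B → ℝ) → ℝ) (a : ℝ)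
    (Q : A → A → B → ℝ) : ℝ :=
  obj W Q + max (max (g (margXY3 Q)) a - g (margX'Y3 Q)) 0

lemma penalizedObj_le_add {a a' δ : ℝ} (hδ : 0 ≤ δ) (ha : a' ≤ a + δ) :
    penalizedObj W g a' Q ≤ penalizedObj W g a Q + δ := by
  have hmax : max (g (margXY3 Q)) a' ≤ max (g (margXY3 Q)) a + δ :=
    max_le (by linarith [le_max_left (g (margXY3 Q)) a])
      (by linarith [le_max_right (g (margXY3 Q)) a])
  have hpos : max (max (g (margXY3 Q)) a' - g (margX'Y3 Q)) 0
      ≤ max (max (g (margXY3 Q)) a - g (margX'Y3 Q)) 0 + δ :=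
    max_le (by linarith [le_max_left (max (g (margXY3 Q)) a - g (margX'Y3 Q)) 0])
      (by linarith [le_max_right (max (g (margXY3 Q)) a - g (margX'Y3 Q)) 0])
  unfold penalizedObj
  linarith

lemma penalizedObj_le_add_abs_sub (a : ℝ) (Q Q' : A → A → B → ℝ) :
    penalizedObj W g a Q' ≤ penalizedObj W g a Q + |obj W Q' - obj W Q|
      + |g (margXY3 Q') - g (margXY3 Q)| + |g (margX'Y3 Q') - g (margX'Y3 Q)| := by
  have hXY := le_abs_self (g (margXY3 Q') - g (margXY3 Q))
  have hX'Y := neg_abs_le (g (margX'Y3 Q') - g (margX'Y3 Q))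
  have hobj := le_abs_self (obj W Q' - obj W Q)
  have hmax : max (g (margXY3 Q')) a
      ≤ max (g (margXY3 Q)) a + |g (margXY3 Q') - g (margXY3 Q)| :=
    max_le (by linarith [le_max_left (g (margXY3 Q)) a])
      (by linarith [le_max_right (g (margXY3 Q)) a, abs_nonneg (g (margXY3 Q') - g (margXY3 Q))])
  have hpos : max (max (g (margXY3 Q')) a - g (margX'Y3 Q')) 0
      ≤ max (max (g (margXY3 Q)) a - g (margX'Y3 Q)) 0
        + |g (margXY3 Q') - g (margXY3 Q)| + |g (margX'Y3 Q') - g (margX'Y3 Q)| :=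
    max_le (by linarith [le_max_left (max (g (margXY3 Q)) a - g (margX'Y3 Q)) 0]) (by positivity)
  unfold penalizedObj
  linarith

lemma eventually_penalizedObj_mixMarg3_le (W : A → B → ℝ)
    (hg : ContinuousOn g {Q | IsJointPMF Q}) {η : ℝ} (hη : 0 < η) :
    ∀ᶠ t in 𝓝[>] (0 : ℝ), ∀ Q, IsJointPMF3 Q → ∀ a,
      penalizedObj W g a (mixMarg3 t Q) ≤ penalizedObj W g a Q + η := by
  have hXY : Continuous (margXY3 : (A → A → B → ℝ) → A → B → ℝ) := by unfold margXY3; fun_prop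
  have hX'Y : Continuous (margX'Y3 : (A → A → B → ℝ) → A → B → ℝ) := by
    unfold margX'Y3; fun_prop
  have hη3 : 0 < η / 3 := by positivity
  filter_upwards [eventually_abs_sub_mixMarg3_le (continuousOn_obj W) hη3,
    eventually_abs_sub_mixMarg3_le (f := fun Q => g (margXY3 Q))
      (hg.comp hXY.continuousOn fun Q hQ => hQ.isJointPMF_margXY3) hη3,
    eventually_abs_sub_mixMarg3_le (f := fun Q => g (margX'Y3 Q))
      (hg.comp hX'Y.continuousOn fun Q hQ => hQ.isJointPMF_margX'Y3) hη3]
    with t hobj hgXY hgX'Y Q hQ a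
  linarith [penalizedObj_le_add_abs_sub (W := W) (g := g) a Q (mixMarg3 t Q), hobj Q hQ,
    hgXY Q hQ, hgX'Y Q hQ]

lemma IsJointPMF3.exists_jointQ_eq (hW : IsChannel W) (hQ : IsJointPMF3 Q) :
    ∃ Qc : A → A → B → ℝ, (∀ a a', IsPMF (Qc a a')) ∧ jointQ (margXX3 Q) Qc = Q := by
  classical
  refine ⟨fun a a' => if margXX3 Q a a' = 0 then W a else fun b => Q a a' b / margXX3 Q a a',
    fun a a' => ?_, ?_⟩
  · beta_reduce
    split_ifs with h0
    · exact ⟨fun b => ((hW a).1 b).le, (hW a).2⟩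
    · refine ⟨fun b => div_nonneg (hQ.1 a a' b) (hQ.isJointPMF_margXX3.1 a a'), ?_⟩
      rw [← Finset.sum_div]
      exact div_self h0
  · funext a a' b
    dsimp only [jointQ]
    split_ifs with h0
    · rw [h0, zero_mul]
      exact ((Finset.sum_eq_zero_iff_of_nonneg fun b _ => hQ.1 a a' b).1 h0 b
        (Finset.mem_univ b)).symm
    · exact mul_div_cancel₀ _ h0

lemma EexTilde_le_penalizedObj (hW : IsChannel W) (hQ : IsJointPMF3 Q) {QX : A → ℝ}
    (hX : margX (margXX3 Q) = QX) (hX' : margY (margXX3 Q) = QX) {R : ℝ}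
    (hI : mutInf (margXX3 Q) ≤ R) :
    EexTilde W g QX R ≤
      ((penalizedObj W g (alphaFun g QX R (margY3 Q)) Q + mutInf (margXX3 Q) - R : ℝ) : EReal) := by
  obtain ⟨Qc, hQc, hjoint⟩ := hQ.exists_jointQ_eq hW
  have hGamma : GammaTilde W g QX R (margXX3 Q)
      ≤ (penalizedObj W g (alphaFun g QX R (margY3 Q)) Q : EReal) :=
    sInf_le ⟨Qc, hQc, by rw [hjoint]; rfl⟩
  calc EexTilde W g QX R
      ≤ GammaTilde W g QX R (margXX3 Q) + (mutInf (margXX3 Q) : EReal) - (R : EReal) :=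
        sInf_le ⟨margXX3 Q, hQ.isJointPMF_margXX3, hX, hX', hI, rfl⟩
    _ ≤ (penalizedObj W g (alphaFun g QX R (margY3 Q)) Q : EReal) + (mutInf (margXX3 Q) : EReal)
        - (R : EReal) := EReal.sub_le_sub (add_le_add hGamma le_rfl) le_rfl
    _ = _ := by rw [EReal.coe_sub, EReal.coe_add]

-- Mixing a type whose mutual information slightly exceeds `R` brings it below `R`.
lemma exists_slack_le_penalizedObj (hW : IsChannel W) (hg : ContinuousOn g {Q | IsJointPMF Q})
    {QX : A → ℝ} {R c η : ℝ} (hR : 0 < R) (hc : (c : EReal) < EexTilde W g QX R) (hη : 0 < η) :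
    ∃ ε > 0, ∀ Q : A → A → B → ℝ, IsJointPMF3 Q → margX (margXX3 Q) = QX →
      margY (margXX3 Q) = QX → mutInf (margXX3 Q) ≤ R + ε →
      c - η ≤ penalizedObj W g (alphaFun g QX R (margY3 Q)) Q + mutInf (margXX3 Q) - R := by
  have hη2 : 0 < η / 2 := by positivity
  obtain ⟨t, hobj, hmutInf, ht₀, ht₁⟩ := ((eventually_penalizedObj_mixMarg3_le W hg hη2).and
    ((eventually_abs_sub_mixMarg3_le (f := fun Q : A → A → B → ℝ => mutInf (margXX3 Q))
      (continuousOn_mutInf.comp continuous_margXX3.continuousOn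
        fun Q hQ => hQ.isJointPMF_margXX3) hη2).and (Ioo_mem_nhdsGT one_pos))).exists
  refine ⟨t * R, by positivity, fun Q hQ hX hX' hI => ?_⟩
  have hXX := hQ.isJointPMF_margXX3
  have hImix : mutInf (margXX3 (mixMarg3 t Q)) ≤ R := by
    rw [hQ.margXX3_mixMarg3]
    calc mutInf (mixMarg t (margXX3 Q)) ≤ (1 - t) * mutInf (margXX3 Q) :=
          hXX.mutInf_mixMarg_le ht₀.le ht₁.le
      _ ≤ (1 - t) * (R + t * R) := by gcongr
      _ ≤ R := by nlinarith [mul_pos (mul_pos ht₀ ht₀) hR]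
  have hlt := EReal.coe_lt_coe_iff.1 <| hc.trans_le <|
    EexTilde_le_penalizedObj hW (hQ.isJointPMF3_mixMarg3 ht₀.le ht₁.le)
      (by rw [hQ.margXX3_mixMarg3, hXX.margX_mixMarg, hX])
      (by rw [hQ.margXX3_mixMarg3, hXX.margY_mixMarg, hX']) hImix
  rw [hQ.margY3_mixMarg3] at hlt
  linarith [hobj Q hQ (alphaFun g QX R (margY3 Q)), (abs_le.1 (hmutInf Q hQ)).2]

end Exponent

section SymbolCount

open scoped Nat

variable {α ι A B : Type*} [Fintype α] [DecidableEq ι] [DecidableEq A] [DecidableEq B]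

/-- The number of positions at which the sequence `z` takes the value `j`. Pairs of sequences are
counted through `Function.prod x y`. -/
def symbolCount (z : α → ι) (j : ι) : ℕ :=
  (Finset.univ.filter fun i => z i = j).card

lemma symbolCount_le_card (z : α → ι) (j : ι) : symbolCount z j ≤ Fintype.card α :=
  Finset.card_le_univ _

lemma sum_symbolCount [Fintype ι] (z : α → ι) : ∑ j, symbolCount z j = Fintype.card α :=
  (Finset.card_eq_sum_card_fiberwise fun _ _ => Finset.mem_univ _).symm

lemma sum_symbolCount_mul [Fintype ι] (z : α → ι) (f : ι → ℝ) :
    ∑ j, (symbolCount z j : ℝ) * f j = ∑ i, f (z i) := by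
  simp only [symbolCount, ← nsmul_eq_mul, ← Finset.sum_const]
  rw [← Finset.sum_fiberwise Finset.univ z]
  exact Finset.sum_congr rfl fun j _ => Finset.sum_congr rfl fun i hi => by
    rw [(Finset.mem_filter.1 hi).2]

lemma sum_symbolCount_prod_right [Fintype B] (x : α → A) (y : α → B) (a : A) :
    ∑ b, symbolCount (Function.prod x y) (a, b) = symbolCount x a := by
  rw [symbolCount, Finset.card_eq_sum_card_fiberwise fun i _ => Finset.mem_univ (y i)]
  simp only [symbolCount, Function.prod, Prod.mk.injEq, Finset.filter_filter]

lemma sum_symbolCount_prod_left [Fintype A] (x : α → A) (y : α → B) (b : B) :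
    ∑ a, symbolCount (Function.prod x y) (a, b) = symbolCount y b := by
  rw [symbolCount, Finset.card_eq_sum_card_fiberwise fun i _ => Finset.mem_univ (x i)]
  simp only [symbolCount, Function.prod, Prod.mk.injEq, Finset.filter_filter, and_comm]

lemma symbolCount_comp_perm (z : α → ι) (σ : Equiv.Perm α) :
    symbolCount (z ∘ σ) = symbolCount z := by
  funext j
  exact Finset.card_bijective σ σ.bijective (by simp)

lemma exists_perm_comp_eq {z w : α → ι} (h : symbolCount z = symbolCount w) :
    ∃ σ : Equiv.Perm α, w ∘ σ = z := by
  have hcard : ∀ j, Fintype.card {i // z i = j} = Fintype.card {i // w i = j} := fun j => by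
    simpa only [Fintype.card_subtype, symbolCount] using congrFun h j
  exact ⟨Equiv.ofFiberEquiv fun j => Fintype.equivOfCardEq (hcard j),
    funext fun i => Equiv.ofFiberEquiv_map _ i⟩

lemma exists_symbolCount_eq [Fintype ι] (k : ι → ℕ) (hk : ∑ j, k j = Fintype.card α) :
    ∃ z : α → ι, symbolCount z = k := by
  have e : α ≃ Σ j, Fin (k j) := Fintype.equivOfCardEq (by simp [hk])
  refine ⟨fun i => (e i).1, funext fun j => ?_⟩
  calc symbolCount (fun i => (e i).1) j
      = (Finset.univ.filter fun s : Σ j, Fin (k j) => s.1 = j).card :=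
        Finset.card_bijective e e.bijective (by simp)
    _ = Fintype.card {s : Σ j, Fin (k j) // s.1 = j} := (Fintype.card_subtype _).symm
    _ = k j := by rw [Fintype.card_congr (Equiv.sigmaSubtype j), Fintype.card_fin]

lemma exists_symbolCount_prod_eq [Fintype A] [Finite B] (y : α → B) (k : A × B → ℕ)
    (hk : ∀ b, ∑ a, k (a, b) = symbolCount y b) :
    ∃ x : α → A, symbolCount (Function.prod x y) = k := by
  have := Fintype.ofFinite B
  obtain ⟨z, rfl⟩ : ∃ z : α → A × B, symbolCount z = k := exists_symbolCount_eq k <| by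
    rw [Fintype.sum_prod_type_right, ← sum_symbolCount y]
    exact Finset.sum_congr rfl fun b _ => hk b
  have hsnd : symbolCount y = symbolCount (Prod.snd ∘ z) := funext fun b =>
    (hk b).symm.trans (sum_symbolCount_prod_left (Prod.fst ∘ z) (Prod.snd ∘ z) b)
  obtain ⟨σ, rfl⟩ := exists_perm_comp_eq hsnd
  exact ⟨Prod.fst ∘ z ∘ σ, symbolCount_comp_perm z σ⟩

lemma card_perm_comp_eq_comp [DecidableEq α] [Fintype ι] (z : α → ι) (τ : Equiv.Perm α) :
    (Finset.univ.filter fun σ : Equiv.Perm α => z ∘ σ = z ∘ τ).card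
      = ∏ j, (symbolCount z j)! := by
  calc (Finset.univ.filter fun σ : Equiv.Perm α => z ∘ σ = z ∘ τ).card
      = (Finset.univ.filter fun ρ : Equiv.Perm α => z ∘ ρ = z).card := by
        refine (Finset.card_bijective (Equiv.mulRight τ) (Equiv.mulRight τ).bijective
          fun ρ => ?_).symm
        simp only [Finset.mem_filter, Finset.mem_univ, true_and, Equiv.coe_mulRight,
          Equiv.Perm.coe_mul, ← Function.comp_assoc]
        exact τ.surjective.injective_comp_right.eq_iff.symm
    _ = ∏ j, (symbolCount z j)! := by
        simpa only [Fintype.card_subtype, symbolCount] using DomMulAct.stabilizer_card z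

-- The permutations fixing `y` move `x` to every sequence of the same joint type with `y`, and
-- those carrying `x` to a given such sequence form a coset of the permutations fixing `(x, y)`.
lemma card_symbolCount_prod_eq_mul_prod_factorial [Fintype A] [Fintype B] [DecidableEq α]
    (x : α → A) (y : α → B) :
    (Finset.univ.filter fun x' : α → A =>
        symbolCount (Function.prod x' y) = symbolCount (Function.prod x y)).card
      * ∏ p, (symbolCount (Function.prod x y) p)! = ∏ b, (symbolCount y b)! := by
  have hmaps : ∀ σ ∈ Finset.univ.filter (fun σ : Equiv.Perm α => y ∘ σ = y ∘ Equiv.refl α),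
      x ∘ σ ∈ Finset.univ.filter fun x' : α → A =>
        symbolCount (Function.prod x' y) = symbolCount (Function.prod x y) := by
    intro σ hσ
    have hσy : y ∘ σ = y := (Finset.mem_filter.1 hσ).2
    refine Finset.mem_filter.2 ⟨Finset.mem_univ _, ?_⟩
    rw [← symbolCount_comp_perm (Function.prod x y) σ]
    exact congrArg (fun y' => symbolCount (Function.prod (x ∘ σ) y')) hσy.symm
  rw [← card_perm_comp_eq_comp y (Equiv.refl α), Finset.card_eq_sum_card_fiberwise hmaps]
  refine (Finset.sum_const_nat fun x' hx' => ?_).symm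
  obtain ⟨τ, hτ⟩ := exists_perm_comp_eq (Finset.mem_filter.1 hx').2
  rw [← card_perm_comp_eq_comp (Function.prod x y) τ, hτ, Finset.filter_filter]
  congr 1
  ext σ
  simp only [Finset.mem_filter, Finset.mem_univ, true_and, funext_iff, Function.comp_apply,
    Function.prod, Equiv.refl_apply, Prod.ext_iff, forall_and, and_comm]

end SymbolCount

section Factorial

open scoped Nat

/-- The logarithmic factor `1 + log (n + 1)` in the exponent of the polynomial terms lost to
Stirling's formula and to counting types of sequences of length `n`. -/
noncomputable def logSlack (n : ℕ) : ℝ := 1 + Real.log (n + 1)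

lemma one_le_logSlack (n : ℕ) : 1 ≤ logSlack n := by
  have : 0 ≤ Real.log ((n : ℝ) + 1) := Real.log_nonneg (by linarith [n.cast_nonneg (α := ℝ)])
  unfold logSlack
  linarith

lemma monotone_logSlack : Monotone logSlack := fun m n h => by
  unfold logSlack
  gcongr

lemma mul_log_sub_le_log_factorial (k : ℕ) : (k : ℝ) * Real.log k - k ≤ Real.log k ! := by
  rcases k.eq_zero_or_pos with rfl | hk
  · simp
  have hlog := Real.log_le_log (by positivity) (Real.pow_div_factorial_le_exp k k.cast_nonneg k)
  rw [Real.log_div (by positivity) (by positivity), Real.log_pow, Real.log_exp] at hlog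
  linarith

lemma log_factorial_le (k : ℕ) :
    Real.log k ! ≤ (k : ℝ) * Real.log k - k + logSlack k := by
  rcases k with _ | k
  · simp [logSlack]
  have hanti : Real.log (Stirling.stirlingSeq (k + 1)) ≤ Real.log (Stirling.stirlingSeq 1) :=
    Stirling.log_stirlingSeq'_antitone k.zero_le
  have hk : (0 : ℝ) < (k + 1 : ℕ) := by positivity
  rw [Stirling.log_stirlingSeq_formula, Stirling.log_stirlingSeq_formula,
    Real.log_mul two_ne_zero hk.ne', Real.log_div hk.ne' (Real.exp_ne_zero 1),
    Real.log_exp] at hanti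
  have hlog : 0 ≤ Real.log (k + 1 : ℕ) := Real.log_natCast_nonneg _
  have hsucc : Real.log (k + 1 : ℕ) ≤ Real.log ((k + 1 : ℕ) + 1) :=
    Real.log_le_log hk (by linarith)
  norm_num at hanti
  unfold logSlack
  push_cast at *
  linarith

end Factorial

section Types

open scoped Nat

variable {ι A B : Type*} [Fintype ι] [Fintype A] [Fintype B] [DecidableEq ι] [DecidableEq A]
  [DecidableEq B] {n : ℕ}

lemma isPMF_empPMF (hn : 0 < n) (z : Fin n → ι) : IsPMF (empPMF z) := by
  refine ⟨fun j => by unfold empPMF; positivity, ?_⟩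
  have hsum : ∑ j, (symbolCount z j : ℝ) = n := by
    exact_mod_cast (sum_symbolCount z).trans (Fintype.card_fin n)
  calc ∑ j, empPMF z j = (∑ j, (symbolCount z j : ℝ)) / n := (Finset.sum_div ..).symm
    _ = 1 := by rw [hsum, div_self (Nat.cast_ne_zero.2 hn.ne')]

lemma natCast_mul_empPMF (z : Fin n → ι) (j : ι) : n * empPMF z j = symbolCount z j := by
  rcases n.eq_zero_or_pos with rfl | hn
  · simp [symbolCount]
  · exact mul_div_cancel₀ _ (Nat.cast_ne_zero.2 hn.ne')

lemma empPMF_eq_empPMF_iff {z w : Fin n → ι} :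
    empPMF z = empPMF w ↔ symbolCount z = symbolCount w := by
  refine ⟨fun h => funext fun j => ?_, fun h => funext fun j => ?_⟩
  · have := natCast_mul_empPMF w j
    rw [← h, natCast_mul_empPMF] at this
    exact_mod_cast this
  · exact congrArg (fun k : ℕ => (k : ℝ) / n) (congrFun h j)

lemma uncurry_empJoint (x : Fin n → A) (y : Fin n → B) :
    Function.uncurry (empJoint x y) = empPMF (Function.prod x y) := by
  funext p
  simp only [Function.uncurry, empJoint, empPMF, Function.prod, Prod.ext_iff]

lemma empJoint_eq_empJoint_iff {x x' : Fin n → A} {y y' : Fin n → B} :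
    empJoint x y = empJoint x' y' ↔
      symbolCount (Function.prod x y) = symbolCount (Function.prod x' y') := by
  rw [← empPMF_eq_empPMF_iff, ← uncurry_empJoint, ← uncurry_empJoint,
    Function.uncurry_injective.eq_iff]

lemma isJointPMF_empJoint (hn : 0 < n) (x : Fin n → A) (y : Fin n → B) :
    IsJointPMF (empJoint x y) := by
  rw [← isPMF_uncurry_iff, uncurry_empJoint]
  exact isPMF_empPMF hn _

lemma empJoint_swap (x : Fin n → A) (y : Fin n → B) :
    empJoint y x = fun b a => empJoint x y a b := by
  funext b a
  simp only [empJoint, and_comm]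

lemma margX_empJoint (x : Fin n → A) (y : Fin n → B) : margX (empJoint x y) = empPMF x := by
  funext a
  calc ∑ b, empJoint x y a b = ∑ b, empPMF (Function.prod x y) (a, b) := by
        rw [← uncurry_empJoint]; rfl
    _ = ((∑ b, symbolCount (Function.prod x y) (a, b) : ℕ) : ℝ) / n := by
        rw [Nat.cast_sum, Finset.sum_div]; rfl
    _ = empPMF x a := by rw [sum_symbolCount_prod_right]; rfl

lemma margY_empJoint (x : Fin n → A) (y : Fin n → B) : margY (empJoint x y) = empPMF y := by
  rw [← margX_empJoint y x, empJoint_swap x y]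
  rfl

lemma mutInf_empJoint (x : Fin n → A) (y : Fin n → B) :
    mutInf (empJoint x y)
      = ent (empPMF x) + ent (empPMF y) - ent (empPMF (Function.prod x y)) := by
  rw [mutInf_eq_ent_add_ent_sub_ent fun a b => by unfold empJoint; positivity, margX_empJoint,
    margY_empJoint, uncurry_empJoint]

lemma sum_symbolCount_mul_log (z : Fin n → ι) :
    ∑ j, (symbolCount z j : ℝ) * Real.log (symbolCount z j)
      = n * Real.log n - n * ent (empPMF z) := by
  have hterm : ∀ j, (symbolCount z j : ℝ) * Real.log (symbolCount z j)
      = symbolCount z j * Real.log n + n * (empPMF z j * Real.log (empPMF z j)) := by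
    intro j
    rw [← mul_assoc, natCast_mul_empPMF]
    rcases (symbolCount z j).eq_zero_or_pos with h0 | hpos
    · simp [h0]
    have hn : 0 < n := hpos.trans_le ((symbolCount_le_card z j).trans_eq (Fintype.card_fin n))
    rw [← natCast_mul_empPMF, Real.log_mul (by positivity)]
    · ring
    · have := natCast_mul_empPMF z j
      intro h0
      rw [h0, mul_zero] at this
      exact hpos.ne (by exact_mod_cast this)
  have hsum : ∑ j, (symbolCount z j : ℝ) = n := by
    exact_mod_cast (sum_symbolCount z).trans (Fintype.card_fin n)
  simp only [hterm, Finset.sum_add_distrib, ← Finset.sum_mul, ← Finset.mul_sum, hsum, ent]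
  ring

lemma le_sum_log_factorial_symbolCount (z : Fin n → ι) :
    n * Real.log n - n - n * ent (empPMF z) ≤ ∑ j, Real.log (symbolCount z j)! := by
  have hsum : ∑ j, (symbolCount z j : ℝ) = n := by
    exact_mod_cast (sum_symbolCount z).trans (Fintype.card_fin n)
  have hle := Finset.sum_le_sum fun j (_ : j ∈ Finset.univ) =>
    mul_log_sub_le_log_factorial (symbolCount z j)
  rw [Finset.sum_sub_distrib, sum_symbolCount_mul_log, hsum] at hle
  linarith

lemma sum_log_factorial_symbolCount_le (z : Fin n → ι) :
    ∑ j, Real.log (symbolCount z j)!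
      ≤ n * Real.log n - n - n * ent (empPMF z) + Fintype.card ι * logSlack n := by
  have hsum : ∑ j, (symbolCount z j : ℝ) = n := by
    exact_mod_cast (sum_symbolCount z).trans (Fintype.card_fin n)
  have hle := Finset.sum_le_sum fun j (_ : j ∈ Finset.univ) =>
    (log_factorial_le (symbolCount z j)).trans (add_le_add le_rfl (monotone_logSlack
      ((symbolCount_le_card z j).trans_eq (Fintype.card_fin n))))
  rw [Finset.sum_add_distrib, Finset.sum_sub_distrib, sum_symbolCount_mul_log, hsum,
    Finset.sum_const, Finset.card_univ, nsmul_eq_mul] at hle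
  linarith

/-- The type class of `p`: the sequences of length `n` with empirical pmf `p`. -/
noncomputable def typeClass (n : ℕ) (p : A → ℝ) : Finset (Fin n → A) :=
  Finset.univ.filter fun x => empPMF x = p

/-- The conditional type class of `Q` given `y`: the sequences whose joint empirical pmf with `y`
is `Q`. -/
noncomputable def condTypeClass (Q : A → B → ℝ) (y : Fin n → B) : Finset (Fin n → A) :=
  Finset.univ.filter fun x => empJoint x y = Q

lemma log_card_condTypeClass (x : Fin n → A) (y : Fin n → B) :
    Real.log (condTypeClass (empJoint x y) y).card
      = ∑ b, Real.log (symbolCount y b)!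
        - ∑ p, Real.log (symbolCount (Function.prod x y) p)! := by
  have hpos : ((condTypeClass (empJoint x y) y).card : ℝ) ≠ 0 :=
    Nat.cast_ne_zero.2 (Finset.card_ne_zero_of_mem (Finset.mem_filter.2 ⟨Finset.mem_univ x, rfl⟩))
  have hcard : ((condTypeClass (empJoint x y) y).card : ℝ)
      * ∏ p, ((symbolCount (Function.prod x y) p)! : ℝ) = ∏ b, ((symbolCount y b)! : ℝ) := by
    simp only [condTypeClass, empJoint_eq_empJoint_iff]
    exact_mod_cast card_symbolCount_prod_eq_mul_prod_factorial x y
  rw [eq_sub_iff_add_eq, ← Real.log_prod fun b _ => by positivity,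
    ← Real.log_prod fun p _ => by positivity, ← hcard,
    Real.log_mul hpos (Finset.prod_ne_zero_iff.2 fun p _ => by positivity)]

lemma card_condTypeClass_pos (x : Fin n → A) (y : Fin n → B) :
    0 < ((condTypeClass (empJoint x y) y).card : ℝ) :=
  Nat.cast_pos.2 (Finset.card_pos.2 ⟨x, Finset.mem_filter.2 ⟨Finset.mem_univ x, rfl⟩⟩)

lemma card_condTypeClass_le (x : Fin n → A) (y : Fin n → B) :
    ((condTypeClass (empJoint x y) y).card : ℝ)
      ≤ Real.exp (n * (ent (empPMF (Function.prod x y)) - ent (empPMF y))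
        + Fintype.card B * logSlack n) := by
  rw [← Real.log_le_iff_le_exp (card_condTypeClass_pos x y), log_card_condTypeClass]
  linarith [sum_log_factorial_symbolCount_le y,
    le_sum_log_factorial_symbolCount (Function.prod x y)]

lemma exp_le_card_condTypeClass (x : Fin n → A) (y : Fin n → B) :
    Real.exp (n * (ent (empPMF (Function.prod x y)) - ent (empPMF y))
        - (Fintype.card A * Fintype.card B) * logSlack n)
      ≤ (condTypeClass (empJoint x y) y).card := by
  rw [← Real.le_log_iff_exp_le (card_condTypeClass_pos x y), log_card_condTypeClass]
  have hle := sum_log_factorial_symbolCount_le (Function.prod x y)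
  rw [Fintype.card_prod, Nat.cast_mul] at hle
  linarith [le_sum_log_factorial_symbolCount y]

lemma condTypeClass_const_unit (x : Fin n → A) :
    condTypeClass (empJoint x fun _ => ()) (fun _ => ()) = typeClass n (empPMF x) := by
  have hunit : ∀ x' : Fin n → A, empJoint x' (fun _ => ()) = fun a _ => empPMF x' a := fun x' => by
    funext a u
    simp [empJoint, empPMF]
  ext x'
  simp only [condTypeClass, typeClass, Finset.mem_filter, hunit, funext_iff, forall_const]

lemma ent_empPMF_const_unit : ent (empPMF fun _ : Fin n => ()) = 0 := by
  rcases n.eq_zero_or_pos with rfl | hn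
  · simp [ent, empPMF]
  · simp [ent, empPMF, hn.ne']

lemma ent_empPMF_prod_const_unit (x : Fin n → A) :
    ent (empPMF (Function.prod x fun _ => ())) = ent (empPMF x) := by
  simp [ent, empPMF, Function.prod, Fintype.sum_prod_type, Prod.ext_iff]

lemma card_typeClass_le (x : Fin n → A) :
    ((typeClass n (empPMF x)).card : ℝ) ≤ Real.exp (n * ent (empPMF x) + logSlack n) := by
  simpa [condTypeClass_const_unit, ent_empPMF_const_unit, ent_empPMF_prod_const_unit]
    using card_condTypeClass_le x fun _ => ()

lemma exp_le_card_typeClass (x : Fin n → A) :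
    Real.exp (n * ent (empPMF x) - Fintype.card A * logSlack n)
      ≤ (typeClass n (empPMF x)).card := by
  simpa [condTypeClass_const_unit, ent_empPMF_const_unit, ent_empPMF_prod_const_unit]
    using exp_le_card_condTypeClass x fun _ => ()

lemma card_condTypeClass_mul_exp_mutInf_le (x : Fin n → A) (y : Fin n → B) :
    ((condTypeClass (empJoint x y) y).card : ℝ) * Real.exp (n * mutInf (empJoint x y))
      ≤ (typeClass n (empPMF x)).card
        * Real.exp ((Fintype.card A + Fintype.card B) * logSlack n) := by
  calc ((condTypeClass (empJoint x y) y).card : ℝ) * Real.exp (n * mutInf (empJoint x y))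
      ≤ Real.exp (n * (ent (empPMF (Function.prod x y)) - ent (empPMF y))
          + Fintype.card B * logSlack n) * Real.exp (n * mutInf (empJoint x y)) := by
        gcongr
        exact card_condTypeClass_le x y
    _ = Real.exp (n * ent (empPMF x) - Fintype.card A * logSlack n)
          * Real.exp ((Fintype.card A + Fintype.card B) * logSlack n) := by
        rw [← Real.exp_add, ← Real.exp_add, mutInf_empJoint]
        congr 1
        ring
    _ ≤ _ := by
        gcongr
        exact exp_le_card_typeClass x

lemma card_typeClass_mul_exp_le (x : Fin n → A) (y : Fin n → B) :
    ((typeClass n (empPMF x)).card : ℝ)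
        * Real.exp (-n * mutInf (empJoint x y)
          - (1 + Fintype.card A * Fintype.card B) * logSlack n)
      ≤ (condTypeClass (empJoint x y) y).card := by
  calc _ ≤ Real.exp (n * ent (empPMF x) + logSlack n)
          * Real.exp (-n * mutInf (empJoint x y)
            - (1 + Fintype.card A * Fintype.card B) * logSlack n) := by
        gcongr
        exact card_typeClass_le x
    _ = Real.exp (n * (ent (empPMF (Function.prod x y)) - ent (empPMF y))
          - (Fintype.card A * Fintype.card B) * logSlack n) := by
        rw [← Real.exp_add, mutInf_empJoint]
        congr 1
        ring
    _ ≤ _ := exp_le_card_condTypeClass x y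

lemma card_image_empPMF_le {S : Type*} (s : Finset S) (τ : S → Fin n → ι) :
    ((s.image fun u => empPMF (τ u)).card : ℝ) ≤ Real.exp (Fintype.card ι * logSlack n) := by
  have hsub : (s.image fun u => empPMF (τ u)) ⊆
      Finset.univ.image fun (k : ι → Fin (n + 1)) j => ((k j : ℕ) : ℝ) / n := by
    intro p hp
    obtain ⟨u, _, rfl⟩ := Finset.mem_image.1 hp
    exact Finset.mem_image.2 ⟨fun j => ⟨symbolCount (τ u) j,
      Nat.lt_succ_of_le ((symbolCount_le_card _ j).trans_eq (Fintype.card_fin n))⟩,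
      Finset.mem_univ _, rfl⟩
  have hcard : (s.image fun u => empPMF (τ u)).card ≤ (n + 1) ^ Fintype.card ι :=
    (Finset.card_le_card hsub).trans (Finset.card_image_le.trans (by simp))
  calc ((s.image fun u => empPMF (τ u)).card : ℝ) ≤ ((n : ℝ) + 1) ^ Fintype.card ι := by
        exact_mod_cast hcard
    _ = Real.exp (Fintype.card ι * Real.log (n + 1)) := by
        rw [Real.exp_nat_mul, Real.exp_log (by positivity)]
    _ ≤ Real.exp (Fintype.card ι * logSlack n) := by
        unfold logSlack
        gcongr
        linarith

lemma sum_comp_empPMF_le {S : Type*} (s : Finset S) (τ : S → Fin n → ι) (F : (ι → ℝ) → ℝ) {b : ℝ}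
    (hb : 0 ≤ b) (hF : ∀ u ∈ s, ((s.filter fun v => empPMF (τ v) = empPMF (τ u)).card : ℝ)
      * F (empPMF (τ u)) ≤ b) :
    ∑ u ∈ s, F (empPMF (τ u)) ≤ Real.exp (Fintype.card ι * logSlack n) * b := by
  calc ∑ u ∈ s, F (empPMF (τ u))
      = ∑ p ∈ s.image fun u => empPMF (τ u),
          (s.filter fun u => empPMF (τ u) = p).card • F p := Finset.sum_comp F _
    _ ≤ (s.image fun u => empPMF (τ u)).card • b := by
        refine Finset.sum_le_card_nsmul _ _ _ fun p hp => ?_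
        obtain ⟨u, hu, rfl⟩ := Finset.mem_image.1 hp
        rw [nsmul_eq_mul]
        exact hF u hu
    _ ≤ Real.exp (Fintype.card ι * logSlack n) * b := by
        rw [nsmul_eq_mul]
        gcongr
        exact card_image_empPMF_le s τ

end Types

section TripleTypes

variable {A B : Type*} [Fintype A] [Fintype B] [DecidableEq A] [DecidableEq B] {n : ℕ}

/-- Joint empirical pmf of three sequences of length `n`. -/
noncomputable def empJoint3 (x x' : Fin n → A) (y : Fin n → B) : A → A → B → ℝ :=
  fun a a' b => empJoint (Function.prod x x') y (a, a') b

lemma margXX3_empJoint3 (x x' : Fin n → A) (y : Fin n → B) :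
    margXX3 (empJoint3 x x' y) = empJoint x x' := by
  funext a a'
  calc ∑ b, empJoint (Function.prod x x') y (a, a') b = empPMF (Function.prod x x') (a, a') :=
        congrFun (margX_empJoint (Function.prod x x') y) (a, a')
    _ = empJoint x x' a a' := congrFun (uncurry_empJoint x x').symm (a, a')

lemma margXY3_empJoint3 (x x' : Fin n → A) (y : Fin n → B) :
    margXY3 (empJoint3 x x' y) = empJoint x y := by
  funext a b
  calc ∑ a', empJoint (Function.prod x x') y (a, a') b
      = ∑ a', empJoint (Function.prod x y) x' (a, b) a' := by
        simp only [empJoint, Function.prod, Prod.mk.injEq, and_right_comm]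
    _ = empPMF (Function.prod x y) (a, b) :=
        congrFun (margX_empJoint (Function.prod x y) x') (a, b)
    _ = empJoint x y a b := congrFun (uncurry_empJoint x y).symm (a, b)

lemma margX'Y3_empJoint3 (x x' : Fin n → A) (y : Fin n → B) :
    margX'Y3 (empJoint3 x x' y) = empJoint x' y := by
  have hswap : ∀ a a' b, empJoint3 x x' y a a' b = empJoint3 x' x y a' a b := fun a a' b => by
    simp only [empJoint3, empJoint, Function.prod, Prod.mk.injEq, and_comm (a := x _ = a)]
  rw [← margXY3_empJoint3 x' x y]
  funext a' b
  simp only [margX'Y3, margXY3, hswap]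

lemma margY3_empJoint3 (x x' : Fin n → A) (y : Fin n → B) :
    margY3 (empJoint3 x x' y) = empPMF y := by
  rw [← margY_empJoint x y, ← margXY3_empJoint3 x x' y]
  rfl

lemma isJointPMF3_empJoint3 (hn : 0 < n) (x x' : Fin n → A) (y : Fin n → B) :
    IsJointPMF3 (empJoint3 x x' y) :=
  isJointPMF_uncurry_iff.1 (isJointPMF_empJoint hn (Function.prod x x') y)

lemma prod_apply_eq_exp_gML {W : A → B → ℝ} (hW : IsChannel W) (x : Fin n → A) (y : Fin n → B) :
    ∏ i, W (x i) (y i) = Real.exp (n * gML W (empJoint x y)) := by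
  have hgML : n * gML W (empJoint x y) = ∑ i, Real.log (W (x i) (y i)) := by
    calc n * gML W (empJoint x y)
        = ∑ p, n * empPMF (Function.prod x y) p * Real.log (W p.1 p.2) := by
          simp only [← uncurry_empJoint, Fintype.sum_prod_type, gML, Finset.mul_sum, mul_assoc,
            Function.uncurry]
      _ = ∑ i, Real.log (W (x i) (y i)) := by
          simp only [natCast_mul_empPMF]
          exact sum_symbolCount_mul _ fun p : A × B => Real.log (W p.1 p.2)
  rw [hgML, Real.exp_sum]
  exact Finset.prod_congr rfl fun i _ => (Real.exp_log ((hW _).1 _)).symm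

lemma card_empJoint3_eq_le (x x' : Fin n → A) (y : Fin n → B) :
    ((Finset.univ.filter fun y' : Fin n → B => empJoint3 x x' y' = empJoint3 x x' y).card : ℝ)
      ≤ Real.exp (n * (ent (Function.uncurry (Function.uncurry (empJoint3 x x' y)))
        - ent (Function.uncurry (margXX3 (empJoint3 x x' y))))
        + (Fintype.card A * Fintype.card A) * logSlack n) := by
  have hsub : (Finset.univ.filter fun y' : Fin n → B => empJoint3 x x' y' = empJoint3 x x' y) ⊆
      condTypeClass (empJoint y (Function.prod x x')) (Function.prod x x') := by
    intro y' hy'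
    refine Finset.mem_filter.2 ⟨Finset.mem_univ _, ?_⟩
    rw [empJoint_swap _ y', empJoint_swap _ y]
    funext b p
    exact congrFun₃ (Finset.mem_filter.1 hy').2 p.1 p.2 b
  have hent : ent (empPMF (Function.prod y (Function.prod x x')))
      = ent (Function.uncurry (Function.uncurry (empJoint3 x x' y))) := by
    rw [← uncurry_empJoint, empJoint_swap]
    exact congrArg Neg.neg (Equiv.sum_comp (Equiv.prodComm B (A × A)) fun p =>
      empJoint (Function.prod x x') y p.1 p.2
        * Real.log (empJoint (Function.prod x x') y p.1 p.2))
  refine (Nat.cast_le.2 (Finset.card_le_card hsub)).trans ((card_condTypeClass_le y _).trans_eq ?_)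
  rw [hent, margXX3_empJoint3, uncurry_empJoint, Fintype.card_prod, Nat.cast_mul]

lemma card_empJoint3_eq_mul_exp_le (W : A → B → ℝ) (g : (A → B → ℝ) → ℝ) (a : ℝ)
    (x x' : Fin n → A) (y : Fin n → B) :
    ((Finset.univ.filter fun y' : Fin n → B => empJoint3 x x' y' = empJoint3 x x' y).card : ℝ)
        * Real.exp (n * (gML W (empJoint x y)
          - max (max (g (empJoint x y)) a - g (empJoint x' y)) 0))
      ≤ Real.exp (-n * penalizedObj W g a (empJoint3 x x' y)
        + (Fintype.card A * Fintype.card A) * logSlack n) := by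
  refine (mul_le_mul_of_nonneg_right (card_empJoint3_eq_le x x' y)
    (Real.exp_pos _).le).trans_eq ?_
  rw [← Real.exp_add, penalizedObj,
    obj_eq_sub_ent W fun a a' b => by unfold empJoint3 empJoint; positivity,
    margXY3_empJoint3, margX'Y3_empJoint3]
  congr 1
  ring

lemma empPMF_prod_prod_eq_iff {x x' : Fin n → A} {y y' : Fin n → B} :
    empPMF (Function.prod (Function.prod x x') y') = empPMF (Function.prod (Function.prod x x') y)
      ↔ empJoint3 x x' y' = empJoint3 x x' y := by
  rw [← uncurry_empJoint, ← uncurry_empJoint, Function.uncurry_injective.eq_iff]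
  exact Function.curry_injective.eq_iff.symm

lemma sum_prod_mul_exp_penalty_le {W : A → B → ℝ} (hW : IsChannel W) (g : (A → B → ℝ) → ℝ)
    (α : (B → ℝ) → ℝ) (x x' : Fin n → A) {v : ℝ}
    (hv : ∀ y, v ≤ penalizedObj W g (α (empPMF y)) (empJoint3 x x' y)) :
    ∑ y : Fin n → B, (∏ i, W (x i) (y i)) * Real.exp (-n *
        max (max (g (empJoint x y)) (α (empPMF y)) - g (empJoint x' y)) 0)
      ≤ Real.exp (-n * v
        + (Fintype.card A * Fintype.card A * (Fintype.card B + 1)) * logSlack n) := by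
  set G : (A → A → B → ℝ) → ℝ := fun Q => Real.exp (n * (gML W (margXY3 Q)
    - max (max (g (margXY3 Q)) (α (margY3 Q)) - g (margX'Y3 Q)) 0)) with hG
  have hterm : ∀ y : Fin n → B, G (empJoint3 x x' y) = Real.exp (n * (gML W (empJoint x y)
      - max (max (g (empJoint x y)) (α (empPMF y)) - g (empJoint x' y)) 0)) := fun y => by
    simp only [hG, margXY3_empJoint3, margX'Y3_empJoint3, margY3_empJoint3]
  have htype : ∀ y : Fin n → B, empJoint3 x x' y
      = fun a a' b => empPMF (Function.prod (Function.prod x x') y) ((a, a'), b) := fun y => by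
    rw [← uncurry_empJoint]
    rfl
  calc _ = ∑ y : Fin n → B, G (empJoint3 x x' y) := by
        refine Finset.sum_congr rfl fun y _ => ?_
        rw [hterm, prod_apply_eq_exp_gML hW, ← Real.exp_add]
        congr 1
        ring
    _ ≤ Real.exp (Fintype.card ((A × A) × B) * logSlack n) * Real.exp (-n * v
          + (Fintype.card A * Fintype.card A) * logSlack n) := by
        simp only [htype]
        refine sum_comp_empPMF_le Finset.univ (fun y => Function.prod (Function.prod x x') y)
          (fun p => G fun a a' b => p ((a, a'), b)) (Real.exp_pos _).le fun y _ => ?_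
        simp only [empPMF_prod_prod_eq_iff, ← htype, hterm]
        refine (card_empJoint3_eq_mul_exp_le W g _ x x' y).trans ?_
        rw [neg_mul, neg_mul]
        gcongr
        exact hv y
    _ = _ := by
        rw [← Real.exp_add, Fintype.card_prod, Fintype.card_prod]
        push_cast
        congr 1
        ring

end TripleTypes

section Quantization

variable {A B : Type*} [Fintype A] [Fintype B]

lemma exists_nat_matrix_sum_eq {r : A → ℕ} {c : B → ℕ} (h : ∑ a, r a = ∑ b, c b) :
    ∃ k : A × B → ℕ, (∀ a, ∑ b, k (a, b) = r a) ∧ ∀ b, ∑ a, k (a, b) = c b := by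
  classical
  obtain ⟨u, hu⟩ := exists_symbolCount_eq (α := Fin (∑ a, r a)) r (Fintype.card_fin _).symm
  obtain ⟨v, hv⟩ := exists_symbolCount_eq (α := Fin (∑ a, r a)) c (by rw [Fintype.card_fin, h])
  exact ⟨symbolCount (Function.prod u v),
    fun a => (sum_symbolCount_prod_right u v a).trans (congrFun hu a),
    fun b => (sum_symbolCount_prod_left u v b).trans (congrFun hv b)⟩

lemma sum_floor_le {f : A → ℝ} (hf : ∀ a, 0 ≤ f a) {k : ℕ} (hk : ∑ a, f a = k) :
    ∑ a, ⌊f a⌋₊ ≤ k := by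
  have := Finset.sum_le_sum fun a (_ : a ∈ Finset.univ) => Nat.floor_le (hf a)
  rw [hk] at this
  exact_mod_cast this

lemma le_sum_floor_add_card {f : A → ℝ} {k : ℕ} (hk : ∑ a, f a = k) :
    k ≤ ∑ a, ⌊f a⌋₊ + Fintype.card A := by
  have := Finset.sum_le_sum fun a (_ : a ∈ Finset.univ) => (Nat.lt_floor_add_one (f a)).le
  rw [hk, Finset.sum_add_distrib, Finset.sum_const, Finset.card_univ, nsmul_eq_mul, mul_one]
    at this
  exact_mod_cast this

lemma exists_nat_matrix_abs_sub_le {q : A × B → ℝ} (hq : ∀ p, 0 ≤ q p) {r : A → ℕ} {c : B → ℕ}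
    (hr : ∀ a, ∑ b, q (a, b) = r a) (hc : ∀ b, ∑ a, q (a, b) = c b) :
    ∃ k : A × B → ℕ, (∀ a, ∑ b, k (a, b) = r a) ∧ (∀ b, ∑ a, k (a, b) = c b) ∧
      ∀ p, |k p - q p| ≤ Fintype.card B := by
  choose r₀ hr₀ using fun a => Nat.exists_eq_add_of_le (sum_floor_le (fun b => hq (a, b)) (hr a))
  choose c₀ hc₀ using fun b => Nat.exists_eq_add_of_le (sum_floor_le (fun a => hq (a, b)) (hc b))
  have htotal : ∑ a, r₀ a = ∑ b, c₀ b := by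
    have hrc : ∑ a, r a = ∑ b, c b := by
      have : ∑ a, (r a : ℝ) = ∑ b, (c b : ℝ) := by
        simp only [← hr, ← hc]
        exact Finset.sum_comm
      exact_mod_cast this
    simp only [hr₀, hc₀, Finset.sum_add_distrib] at hrc
    rw [Finset.sum_comm] at hrc
    exact Nat.add_left_cancel hrc
  obtain ⟨m, hmr, hmc⟩ := exists_nat_matrix_sum_eq htotal
  refine ⟨fun p => ⌊q p⌋₊ + m p, fun a => ?_, fun b => ?_, fun ⟨a, b⟩ => ?_⟩
  · rw [Finset.sum_add_distrib, hmr, hr₀]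
  · rw [Finset.sum_add_distrib, hmc, hc₀]
  have hm : m (a, b) ≤ Fintype.card B := by
    have hrow := le_sum_floor_add_card (hr a)
    rw [hr₀ a] at hrow
    calc m (a, b) ≤ ∑ b, m (a, b) :=
          Finset.single_le_sum (f := fun b => m (a, b)) (fun _ _ => Nat.zero_le _)
            (Finset.mem_univ b)
      _ = r₀ a := hmr a
      _ ≤ Fintype.card B := Nat.le_of_add_le_add_left hrow
  have hm' : (m (a, b) : ℝ) ≤ Fintype.card B := Nat.cast_le.2 hm
  have hone : (1 : ℝ) ≤ Fintype.card B := by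
    exact_mod_cast Fintype.card_pos_iff.2 ⟨b⟩
  have hfloor := Nat.floor_le (hq (a, b))
  have hfloor' := Nat.lt_floor_add_one (q (a, b))
  push_cast
  rw [abs_le]
  constructor <;> linarith [(m (a, b)).cast_nonneg (α := ℝ)]

variable {g : (A → B → ℝ) → ℝ} {QX : A → ℝ} {R η : ℝ}

lemma exists_slack_alphaFun_le (hg : ContinuousOn g {Q | IsJointPMF Q}) (hQX : IsPMF QX)
    (hR : 0 < R) (hη : 0 < η) :
    ∃ ε > 0, ∀ QY : B → ℝ, IsPMF QY → ∃ Q : A → B → ℝ, IsJointPMF Q ∧ margX Q = QX ∧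
      margY Q = QY ∧ mutInf Q ≤ R - ε ∧ alphaFun g QX R QY ≤ g Q - mutInf Q + R + η := by
  have hη₄ : 0 < η / 4 := by positivity
  have hmixg := eventually_abs_sub_mixMarg_le hg hη₄
  have hmixI := eventually_abs_sub_mixMarg_le (continuousOn_mutInf (A := A) (B := B)) hη₄
  have hmem : Set.Ioo (0 : ℝ) 1 ∈ 𝓝[>] 0 := Ioo_mem_nhdsGT one_pos
  obtain ⟨t, htg, htI, ht₀, ht₁⟩ := (hmixg.and (hmixI.and hmem)).exists
  refine ⟨t * R, by positivity, fun QY hQY => ?_⟩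
  obtain ⟨_, ⟨Q, hQ, rfl, rfl, hI, rfl⟩, hlt⟩ := exists_lt_of_lt_csSup
    (s := {v : ℝ | ∃ Q : A → B → ℝ, IsJointPMF Q ∧ margX Q = QX ∧ margY Q = QY ∧
      mutInf Q ≤ R ∧ v = g Q - mutInf Q + R}) (b := alphaFun g QX R QY - η / 2)
    ⟨_, _, hQX.isJointPMF_mul hQY, margX_mul QX hQY.2, margY_mul QY hQX.2,
      (hQX.mutInf_mul hQY).trans_le hR.le, rfl⟩ (sub_lt_self _ (half_pos hη))
  refine ⟨mixMarg t Q, hQ.isJointPMF_mixMarg ht₀.le ht₁.le, hQ.margX_mixMarg t,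
    hQ.margY_mixMarg t, ?_, ?_⟩
  · have hmul := mul_le_mul_of_nonneg_left hI (sub_nonneg.2 ht₁.le)
    linarith [hQ.mutInf_mixMarg_le ht₀.le ht₁.le]
  · linarith [(abs_le.1 (htg Q hQ)).1, (abs_le.1 (htI Q hQ)).2]

variable [DecidableEq A] [DecidableEq B]

lemma IsJointPMF.exists_dist_empJoint_le {Q : A → B → ℝ} (hQ : IsJointPMF Q) {n : ℕ} (hn : 0 < n)
    (hX : ∀ a, ∃ k : ℕ, n * margX Q a = k) {y : Fin n → B} (hY : margY Q = empPMF y) :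
    ∃ x : Fin n → A, empPMF x = margX Q ∧ dist (empJoint x y) Q ≤ Fintype.card B / n := by
  have hn' : (0 : ℝ) < n := Nat.cast_pos.2 hn
  choose r hr using hX
  obtain ⟨k, hkr, hkc, hk⟩ := exists_nat_matrix_abs_sub_le
    (q := fun p : A × B => n * Q p.1 p.2) (r := r) (c := symbolCount y)
    (fun p => mul_nonneg hn'.le (hQ.1 _ _))
    (fun a => by rw [← Finset.mul_sum]; exact hr a)
    (fun b => by rw [← Finset.mul_sum, ← natCast_mul_empPMF, ← hY]; rfl)
  obtain ⟨x, hx⟩ := exists_symbolCount_prod_eq y k hkc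
  refine ⟨x, funext fun a => ?_, (dist_pi_le_iff (by positivity)).2 fun a =>
    (dist_pi_le_iff (by positivity)).2 fun b => ?_⟩
  · apply mul_left_cancel₀ hn'.ne'
    rw [natCast_mul_empPMF, hr, ← hkr, ← hx, sum_symbolCount_prod_right]
  · have hxy : n * empJoint x y a b = k (a, b) := by
      rw [← hx, ← natCast_mul_empPMF, ← uncurry_empJoint]
      rfl
    rw [Real.dist_eq, le_div_iff₀' hn', ← abs_of_pos hn', ← abs_mul, mul_sub, hxy]
    exact hk (a, b)

lemma exists_slack_eventually_alphaFun_empPMF_le (hg : ContinuousOn g {Q | IsJointPMF Q})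
    (hQX : IsPMF QX) (hR : 0 < R) (hη : 0 < η) :
    ∃ ε > 0, ∀ᶠ n : ℕ in atTop, (∀ a, ∃ k : ℕ, (n : ℝ) * QX a = k) → ∀ y : Fin n → B,
      ∃ x : Fin n → A, empPMF x = QX ∧ mutInf (empJoint x y) ≤ R - ε ∧
        alphaFun g QX R (empPMF y) ≤ g (empJoint x y) - mutInf (empJoint x y) + R + η := by
  obtain ⟨ε, hε, happrox⟩ := exists_slack_alphaFun_le hg hQX hR (half_pos hη)
  have hη₄ : 0 < η / 4 := by positivity
  have hcompact := isCompact_setOf_isJointPMF (A := A) (B := B)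
  have hcloseg := eventually_abs_sub_le_of_isCompact hcompact hg hη₄
  have hcloseI := eventually_abs_sub_le_of_isCompact hcompact continuousOn_mutInf
    (lt_min (half_pos hε) hη₄)
  obtain ⟨δ, hδg, hδI, hδ : 0 < δ⟩ := (hcloseg.and (hcloseI.and self_mem_nhdsWithin)).exists
  have hsmall : ∀ᶠ n : ℕ in atTop, (Fintype.card B : ℝ) / n ≤ δ :=
    (tendsto_const_div_atTop_nhds_zero_nat _).eventually_le_const hδ
  refine ⟨ε / 2, half_pos hε, ?_⟩
  filter_upwards [hsmall, eventually_gt_atTop 0] with n hn hn₀ hk y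
  obtain ⟨Q, hQ, rfl, hY, hI, hα⟩ := happrox (empPMF y) (isPMF_empPMF hn₀ y)
  obtain ⟨x, hx, hdist⟩ := hQ.exists_dist_empJoint_le hn₀ hk hY
  have hgx := abs_le.1 (hδg _ (isJointPMF_empJoint hn₀ x y) Q hQ (hdist.trans hn))
  have hIx := abs_le.1 (hδI _ (isJointPMF_empJoint hn₀ x y) Q hQ (hdist.trans hn))
  have hmin := min_le_left (ε / 2) (η / 4)
  have hmin' := min_le_right (ε / 2) (η / 4)
  exact ⟨x, hx, by linarith, by linarith⟩

end Quantization

section RandomCode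

variable {T : Type*} [Fintype T] {K : ℕ}

lemma sum_pi_apply_apply_le {f : T → T → ℝ} {b : ℝ} (hf : ∀ t, ∑ t', f t t' ≤ Fintype.card T * b)
    {m m' : Fin K} (h : m' ≠ m) :
    ∑ C : Fin K → T, f (C m) (C m') ≤ (Fintype.card T : ℝ) ^ K * b := by
  calc ∑ C : Fin K → T, f (C m) (C m')
      = ∑ p : T × ({j // j ≠ m'} → T), f (p.2 ⟨m, h.symm⟩) p.1 :=
        Fintype.sum_equiv (Equiv.funSplitAt m' T) _ _ fun C => rfl
    _ = ∑ c : {j // j ≠ m'} → T, ∑ t, f (c ⟨m, h.symm⟩) t := by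
        rw [Fintype.sum_prod_type, Finset.sum_comm]
    _ ≤ ∑ _c : {j // j ≠ m'} → T, (Fintype.card T : ℝ) * b := Finset.sum_le_sum fun c _ => hf _
    _ = (Fintype.card T : ℝ) ^ (K - 1) * (Fintype.card T * b) := by
        simp only [Finset.sum_const, Finset.card_univ, Fintype.card_fun, nsmul_eq_mul,
          Fintype.card_subtype_compl, Fintype.card_fin, Fintype.card_unique, Nat.cast_pow]
    _ = (Fintype.card T : ℝ) ^ K * b := by
        rw [← mul_assoc, ← pow_succ, Nat.sub_add_cancel (Nat.one_le_of_lt m.pos)]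

lemma sum_pi_sum_ne_le {f : T → T → ℝ} {b : ℝ} (hb : 0 ≤ b)
    (hf : ∀ t, ∑ t', f t t' ≤ Fintype.card T * b) :
    ∑ C : Fin K → T, ∑ m, ∑ m' ∈ Finset.univ.filter (· ≠ m), f (C m) (C m')
      ≤ (Fintype.card T : ℝ) ^ K * ((K : ℝ) ^ 2 * b) := by
  calc _ = ∑ m, ∑ m' ∈ Finset.univ.filter (· ≠ m), ∑ C : Fin K → T, f (C m) (C m') := by
        rw [Finset.sum_comm]
        exact Finset.sum_congr rfl fun m _ => Finset.sum_comm
    _ ≤ ∑ m : Fin K, ∑ _m' ∈ Finset.univ.filter (· ≠ m), (Fintype.card T : ℝ) ^ K * b :=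
        Finset.sum_le_sum fun m _ => Finset.sum_le_sum fun m' hm' =>
          sum_pi_apply_apply_le hf (Finset.mem_filter.1 hm').2
    _ ≤ ∑ _m : Fin K, ∑ _m' : Fin K, (Fintype.card T : ℝ) ^ K * b :=
        Finset.sum_le_sum fun m _ => Finset.sum_le_sum_of_subset_of_nonneg
          (Finset.filter_subset _ _) fun _ _ _ => by positivity
    _ = _ := by
        simp only [Finset.sum_const, Finset.card_univ, Fintype.card_fin, nsmul_eq_mul]
        ring

lemma sum_exp_neg_boole_le [Nonempty T] (P : T → Prop) [DecidablePred P] :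
    ∑ t, Real.exp (-(if P t then 1 else 0)) ≤ Fintype.card T
      * Real.exp (-((Finset.univ.filter P).card / (2 * Fintype.card T))) := by
  calc ∑ t, Real.exp (-(if P t then 1 else 0))
      ≤ ∑ t, (1 - (1 / 2) * if P t then 1 else 0) := by
        refine Finset.sum_le_sum fun t _ => ?_
        split_ifs
        · linarith [Real.exp_neg_one_lt_half]
        · simp
    _ = Fintype.card T * (-((Finset.univ.filter P).card / (2 * Fintype.card T)) + 1) := by
        rw [Finset.sum_sub_distrib, ← Finset.mul_sum, Finset.sum_boole]
        simp only [Finset.sum_const, Finset.card_univ, nsmul_eq_mul, mul_one]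
        field_simp
        ring
    _ ≤ _ := by
        gcongr
        exact Real.add_one_le_exp _

lemma sum_pi_exp_neg_card_le [Nonempty T] (P : T → Prop) [DecidablePred P] {q : ℝ}
    (hq : q * Fintype.card T ≤ K * (Finset.univ.filter P).card) :
    ∑ C : Fin K → T, Real.exp (-(Finset.univ.filter fun i => P (C i)).card)
      ≤ (Fintype.card T : ℝ) ^ K * Real.exp (-q / 2) := by
  calc ∑ C : Fin K → T, Real.exp (-(Finset.univ.filter fun i => P (C i)).card)
      = ∑ C : Fin K → T, ∏ i, Real.exp (-(if P (C i) then 1 else 0)) := by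
        simp only [← Real.exp_sum, Finset.sum_neg_distrib, Finset.sum_boole]
    _ = (∑ t, Real.exp (-(if P t then 1 else 0))) ^ K :=
        (Fintype.sum_pow (fun t => Real.exp (-(if P t then 1 else 0))) K).symm
    _ ≤ (Fintype.card T
          * Real.exp (-((Finset.univ.filter P).card / (2 * Fintype.card T)))) ^ K := by
        gcongr
        exact sum_exp_neg_boole_le P
    _ = (Fintype.card T : ℝ) ^ K
          * Real.exp (-(K * (Finset.univ.filter P).card / (2 * Fintype.card T))) := by
        rw [mul_pow, ← Real.exp_nat_mul]
        congr 2
        ring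
    _ ≤ _ := by
        gcongr
        rw [neg_div, neg_le_neg_iff, div_le_div_iff₀ two_pos (by positivity)]
        linarith

lemma sum_pi_sum_exp_sub_card_le [Nonempty T] {E : Type*} (s : Finset E) (P : E → T → Prop)
    [∀ e, DecidablePred (P e)] {q : E → ℝ} {q₀ : ℝ} (hq₀ : ∀ e ∈ s, q₀ ≤ q e)
    (hq : ∀ e ∈ s, q e * Fintype.card T ≤ K * (Finset.univ.filter (P e)).card) :
    ∑ C : Fin K → T, ∑ e ∈ s, Real.exp (q e / 4 - (Finset.univ.filter fun i => P e (C i)).card)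
      ≤ (Fintype.card T : ℝ) ^ K * (s.card * Real.exp (-q₀ / 4)) := by
  calc _ = ∑ e ∈ s, Real.exp (q e / 4)
          * ∑ C : Fin K → T, Real.exp (-(Finset.univ.filter fun i => P e (C i)).card) := by
        rw [Finset.sum_comm]
        simp only [Finset.mul_sum, ← Real.exp_add, sub_eq_add_neg]
    _ ≤ ∑ e ∈ s, Real.exp (q e / 4) * ((Fintype.card T : ℝ) ^ K * Real.exp (-q e / 2)) := by
        gcongr with e he
        exact sum_pi_exp_neg_card_le (P e) (hq e he)
    _ = ∑ e ∈ s, (Fintype.card T : ℝ) ^ K * Real.exp (-q e / 4) := by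
        refine Finset.sum_congr rfl fun e _ => ?_
        rw [mul_left_comm, ← Real.exp_add]
        congr 2
        ring
    _ ≤ ∑ _e ∈ s, (Fintype.card T : ℝ) ^ K * Real.exp (-q₀ / 4) := by
        gcongr with e he
        exact hq₀ e he
    _ = _ := by
        rw [Finset.sum_const, nsmul_eq_mul]
        ring

lemma exists_lt_one_and_le_two_mul [Nonempty T] {φ ψ : T → ℝ} (hφ : ∀ t, 0 ≤ φ t)
    (hψ : ∀ t, 0 ≤ ψ t) {b : ℝ} (hb : 0 < b) (hφ_sum : ∑ t, φ t < Fintype.card T * (1 / 2))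
    (hψ_sum : ∑ t, ψ t ≤ Fintype.card T * b) : ∃ t, φ t < 1 ∧ ψ t ≤ 2 * b := by
  obtain ⟨t, -, ht⟩ : ∃ t ∈ Finset.univ, φ t + ψ t / (2 * b) < 1 := by
    refine Finset.exists_lt_of_sum_lt ?_
    have hψ_div : (∑ t, ψ t) / (2 * b) ≤ Fintype.card T * (1 / 2) := by
      rw [div_le_iff₀ (by positivity)]
      linarith
    rw [Finset.sum_add_distrib, ← Finset.sum_div, Finset.sum_const, Finset.card_univ,
      nsmul_eq_mul]
    linarith
  have hψt : 0 ≤ ψ t / (2 * b) := div_nonneg (hψ t) (by positivity)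
  exact ⟨t, by linarith, (div_le_one (by positivity)).1 (by linarith [hφ t])⟩

lemma exists_code_le_card_and_sum_le [Nonempty T] (hK : 0 < K) {E : Type*} (s : Finset E)
    (P : E → T → Prop) [∀ e, DecidablePred (P e)] {q : E → ℝ} {q₀ : ℝ} (hq₀ : ∀ e ∈ s, q₀ ≤ q e)
    (hq : ∀ e ∈ s, q e * Fintype.card T ≤ K * (Finset.univ.filter (P e)).card)
    (hs : s.card * Real.exp (-q₀ / 4) < 1 / 2) {f : T → T → ℝ} (hf₀ : ∀ t t', 0 ≤ f t t')
    {b : ℝ} (hb : 0 < b) (hf : ∀ t, ∑ t', f t t' ≤ Fintype.card T * b) :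
    ∃ C : Fin K → T, (∀ e ∈ s, q e / 4 ≤ (Finset.univ.filter fun i => P e (C i)).card) ∧
      ∑ m, ∑ m' ∈ Finset.univ.filter (· ≠ m), f (C m) (C m') ≤ 2 * ((K : ℝ) ^ 2 * b) := by
  have hcard : (Fintype.card (Fin K → T) : ℝ) = (Fintype.card T : ℝ) ^ K := by
    rw [Fintype.card_fun, Fintype.card_fin, Nat.cast_pow]
  obtain ⟨C, hφ, hψ⟩ := exists_lt_one_and_le_two_mul (b := (K : ℝ) ^ 2 * b)
    (φ := fun C : Fin K → T =>
      ∑ e ∈ s, Real.exp (q e / 4 - (Finset.univ.filter fun i => P e (C i)).card))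
    (ψ := fun C => ∑ m, ∑ m' ∈ Finset.univ.filter (· ≠ m), f (C m) (C m'))
    (fun C => by positivity)
    (fun C => Finset.sum_nonneg fun m _ => Finset.sum_nonneg fun m' _ => hf₀ _ _)
    (by positivity)
    (by rw [hcard]; exact (sum_pi_sum_exp_sub_card_le s P hq₀ hq).trans_lt (by gcongr))
    (by rw [hcard]; exact sum_pi_sum_ne_le hb.le hf)
  refine ⟨C, fun e he => ?_, hψ⟩
  have hterm : Real.exp (q e / 4 - (Finset.univ.filter fun i => P e (C i)).card) < 1 :=
    (Finset.single_le_sum (f := fun e =>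
      Real.exp (q e / 4 - (Finset.univ.filter fun i => P e (C i)).card))
      (fun _ _ => (Real.exp_pos _).le) he).trans_lt hφ
  linarith [Real.exp_lt_one_iff.1 hterm]

lemma exists_embedding_forall_le {M : ℕ} (hM : 2 * M ≤ Fintype.card T) {S : T → ℝ}
    (hS : ∀ t, 0 ≤ S t) {v : ℝ} (hv : 0 < v) (hsum : ∑ t, S t ≤ M * v) :
    ∃ j : Fin M ↪ T, ∀ i, S (j i) ≤ v := by
  classical
  have hbad : (Finset.univ.filter fun t => ¬ S t ≤ v).card ≤ M := by
    have hle : ((Finset.univ.filter fun t => ¬ S t ≤ v).card : ℝ) * v ≤ M * v := by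
      calc _ = ∑ _t ∈ Finset.univ.filter fun t => ¬ S t ≤ v, v := by
            rw [Finset.sum_const, nsmul_eq_mul]
        _ ≤ ∑ t ∈ Finset.univ.filter fun t => ¬ S t ≤ v, S t :=
            Finset.sum_le_sum fun t ht => (not_le.1 (Finset.mem_filter.1 ht).2).le
        _ ≤ ∑ t, S t := Finset.sum_le_sum_of_subset_of_nonneg (Finset.subset_univ _)
            fun t _ _ => hS t
        _ ≤ M * v := hsum
    exact_mod_cast le_of_mul_le_mul_right hle hv
  have hgood : M ≤ Fintype.card {t // S t ≤ v} := by
    have := Finset.card_filter_add_card_filter_not (s := Finset.univ) fun t => S t ≤ v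
    rw [Finset.card_univ] at this
    rw [Fintype.card_subtype]
    omega
  obtain ⟨j⟩ : Nonempty (Fin M ↪ {t // S t ≤ v}) :=
    Function.Embedding.nonempty_of_card_le (by rwa [Fintype.card_fin])
  exact ⟨j.trans (Function.Embedding.subtype _), fun i => (j i).2⟩

end RandomCode

section ErrorProbability

variable {A B : Type*} [Fintype A] [Fintype B] [DecidableEq A] [DecidableEq B] {n M K : ℕ}
  {W : A → B → ℝ} (g : (A → B → ℝ) → ℝ)

lemma Perr_eq_sum_prod_mul_one_sub (W : A → B → ℝ) (C : Fin M → Fin n → A) (m : Fin M) :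
    Perr W g C m = ∑ y : Fin n → B, (∏ i, W (C m i) (y i)) *
      (1 - Real.exp (n * g (empJoint (C m) y)) / ∑ k, Real.exp (n * g (empJoint (C k) y))) := by
  rw [Perr, Finset.sum_comm]
  refine Finset.sum_congr rfl fun y _ => ?_
  have hpos : 0 < ∑ k, Real.exp (n * g (empJoint (C k) y)) :=
    Finset.sum_pos (fun _ _ => Real.exp_pos _) ⟨m, Finset.mem_univ m⟩
  rw [← Finset.sum_div, ← Finset.mul_sum, mul_div_assoc, one_sub_div hpos.ne', Finset.filter_ne',
    ← Finset.add_sum_erase _ _ (Finset.mem_univ m), add_sub_cancel_left]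

lemma Perr_comp_le (hW : IsChannel W) (C : Fin K → Fin n → A) (j : Fin M ↪ Fin K) (m : Fin M) :
    Perr W g (C ∘ j) m ≤ Perr W g C (j m) := by
  rw [Perr_eq_sum_prod_mul_one_sub, Perr_eq_sum_prod_mul_one_sub]
  refine Finset.sum_le_sum fun y _ => mul_le_mul_of_nonneg_left ?_
    (Finset.prod_nonneg fun i _ => ((hW _).1 _).le)
  have hpos : 0 < ∑ i, Real.exp (n * g (empJoint (C (j i)) y)) :=
    Finset.sum_pos (fun _ _ => Real.exp_pos _) ⟨m, Finset.mem_univ m⟩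
  have hsum : ∑ i, Real.exp (n * g (empJoint (C (j i)) y))
      ≤ ∑ k, Real.exp (n * g (empJoint (C k) y)) := by
    rw [← Finset.sum_map Finset.univ j fun k => Real.exp (n * g (empJoint (C k) y))]
    exact Finset.sum_le_sum_of_subset_of_nonneg (Finset.subset_univ _)
      fun _ _ _ => (Real.exp_pos _).le
  simp only [Function.comp_apply]
  gcongr

lemma Perr_le_sum_exp_penalty (hW : IsChannel W) {C : Fin K → Fin n → A} {α : (B → ℝ) → ℝ}
    (hα : ∀ y : Fin n → B,
      Real.exp (n * α (empPMF y)) ≤ ∑ k, Real.exp (n * g (empJoint (C k) y))) (m : Fin K) :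
    Perr W g C m ≤ ∑ m' ∈ Finset.univ.filter (· ≠ m), ∑ y : Fin n → B, (∏ i, W (C m i) (y i)) *
      Real.exp (-n *
        max (max (g (empJoint (C m) y)) (α (empPMF y)) - g (empJoint (C m') y)) 0) := by
  refine Finset.sum_le_sum fun m' _ => Finset.sum_le_sum fun y _ => ?_
  rw [mul_div_assoc]
  refine mul_le_mul_of_nonneg_left ?_ (Finset.prod_nonneg fun i _ => ((hW _).1 _).le)
  have hterm : ∀ k, Real.exp (n * g (empJoint (C k) y))
      ≤ ∑ k, Real.exp (n * g (empJoint (C k) y)) := fun k =>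
    Finset.single_le_sum (f := fun k => Real.exp (n * g (empJoint (C k) y)))
      (fun _ _ => (Real.exp_pos _).le) (Finset.mem_univ k)
  have hdiv : ∀ u : ℝ, Real.exp (n * u) ≤ ∑ k, Real.exp (n * g (empJoint (C k) y)) →
      Real.exp (n * g (empJoint (C m') y)) / ∑ k, Real.exp (n * g (empJoint (C k) y))
        ≤ Real.exp (-n * (u - g (empJoint (C m') y))) := fun u hu => by
    calc _ ≤ Real.exp (n * g (empJoint (C m') y)) / Real.exp (n * u) := by gcongr
      _ = _ := by rw [← Real.exp_sub]; congr 1; ring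
  rw [← max_sub_sub_right, ← sub_self (g (empJoint (C m') y)), max_sub_sub_right,
    max_sub_sub_right]
  rcases max_choice (max (g (empJoint (C m) y)) (α (empPMF y))) (g (empJoint (C m') y))
    with h | h
  · rw [h]
    rcases max_choice (g (empJoint (C m) y)) (α (empPMF y)) with h' | h' <;> rw [h']
    · exact hdiv _ (hterm m)
    · exact hdiv _ (hα y)
  · rw [h]
    exact hdiv _ (hterm m')

lemma Perr_pos (hM : 2 ≤ M) [Nonempty B] (hW : IsChannel W) (C : Fin M → Fin n → A) (m : Fin M) :
    0 < Perr W g C m := by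
  have := Fin.nontrivial_iff_two_le.2 hM
  obtain ⟨m', hm'⟩ := exists_ne m
  refine Finset.sum_pos (fun m' _ => Finset.sum_pos (fun y _ => ?_) Finset.univ_nonempty)
    ⟨m', Finset.mem_filter.2 ⟨Finset.mem_univ _, hm'⟩⟩
  exact div_pos (mul_pos (Finset.prod_pos fun i _ => (hW _).1 _) (Real.exp_pos _))
    (Finset.sum_pos (fun _ _ => Real.exp_pos _) ⟨m, Finset.mem_univ m⟩)

end ErrorProbability

section ConstantComposition

variable {A B : Type*} [Fintype A] [Fintype B] [DecidableEq A] [DecidableEq B] {n K : ℕ}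

/-- The sum `∑_{m' ≠ m} e^{n I(x_m; x_{m'})}` of the code `C`, with `I(x_m; x_{m'})` the empirical
mutual information. It controls the union bound for the error probability of message `m`. -/
noncomputable def infoSum (C : Fin K → Fin n → A) (m : Fin K) : ℝ :=
  ∑ m' ∈ Finset.univ.filter (· ≠ m), Real.exp (n * mutInf (empJoint (C m) (C m')))

/-- For every `y ∈ B^n` and every joint type with `A`-marginal `p` and mutual information `I ≤ r`,
the code has, up to a subexponential factor, at least the `e^{n(R - I)}` codewords of this joint
type with `y` that are expected from `e^{nR}` random sequences of type `p`. -/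
def PopulatesTypes (B : Type*) [Fintype B] [DecidableEq B] (p : A → ℝ) (R r : ℝ)
    (C : Fin K → Fin n → A) : Prop :=
  ∀ (x : Fin n → A) (y : Fin n → B), empPMF x = p → mutInf (empJoint x y) ≤ r →
    Real.exp (n * (R - mutInf (empJoint x y))
        - (1 + Fintype.card A * Fintype.card B) * logSlack n) / 4
      ≤ (Finset.univ.filter fun i => empJoint (C i) y = empJoint x y).card

lemma mem_typeClass {p : A → ℝ} {x : Fin n → A} : x ∈ typeClass n p ↔ empPMF x = p := by
  simp [typeClass]

lemma filter_typeClass_empJoint_eq (x : Fin n → A) (y : Fin n → B) :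
    ((typeClass n (empPMF x)).filter fun x' => empJoint x' y = empJoint x y)
      = condTypeClass (empJoint x y) y := by
  ext x'
  simp only [condTypeClass, Finset.mem_filter, mem_typeClass, Finset.mem_univ, true_and,
    and_iff_right_iff_imp]
  exact fun h => by rw [← margX_empJoint x' y, h, margX_empJoint]

lemma sum_typeClass_exp_mutInf_le (p : A → ℝ) (y : Fin n → B) :
    ∑ x ∈ typeClass n p, Real.exp (n * mutInf (empJoint x y))
      ≤ (typeClass n p).card * Real.exp ((Fintype.card A * Fintype.card B
        + (Fintype.card A + Fintype.card B)) * logSlack n) := by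
  have hcurry : ∀ x : Fin n → A,
      empJoint x y = Function.curry (empPMF (Function.prod x y)) := fun x => by
    rw [← uncurry_empJoint, Function.curry_uncurry]
  have hsum := sum_comp_empPMF_le (typeClass n p) (fun x => Function.prod x y)
    (fun q => Real.exp (n * mutInf (Function.curry q)))
    (b := (typeClass n p).card * Real.exp ((Fintype.card A + Fintype.card B) * logSlack n))
    (by positivity) fun x hx => by
      obtain rfl := mem_typeClass.1 hx
      simp only [empPMF_eq_empPMF_iff, ← empJoint_eq_empJoint_iff, ← hcurry,
        filter_typeClass_empJoint_eq]
      exact card_condTypeClass_mul_exp_mutInf_le x y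
  simp only [← hcurry] at hsum
  refine hsum.trans_eq ?_
  rw [mul_left_comm, ← Real.exp_add, Fintype.card_prod, Nat.cast_mul, ← add_mul]

lemma exp_mul_card_typeClass_le {R : ℝ} (hK : Real.exp (n * R) ≤ K) (x : Fin n → A)
    (y : Fin n → B) :
    Real.exp (n * (R - mutInf (empJoint x y))
        - (1 + Fintype.card A * Fintype.card B) * logSlack n)
        * Fintype.card (typeClass n (empPMF x))
      ≤ K * (Finset.univ.filter fun t : typeClass n (empPMF x) =>
        empJoint t.1 y = empJoint x y).card := by
  have hcard : (Finset.univ.filter fun t : typeClass n (empPMF x) =>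
      empJoint t.1 y = empJoint x y).card = (condTypeClass (empJoint x y) y).card := by
    rw [← filter_typeClass_empJoint_eq, Finset.card_filter, Finset.card_filter]
    exact Finset.sum_coe_sort _ fun x' => if empJoint x' y = empJoint x y then 1 else 0
  rw [hcard, Fintype.card_coe]
  calc _ = Real.exp (n * R) * ((typeClass n (empPMF x)).card
          * Real.exp (-n * mutInf (empJoint x y)
            - (1 + Fintype.card A * Fintype.card B) * logSlack n)) := by
        rw [mul_left_comm, ← Real.exp_add, mul_comm]
        congr 2
        ring
    _ ≤ _ := by
        gcongr
        exact card_typeClass_mul_exp_le x y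

lemma exists_populatesTypes_and_sum_infoSum_le (hK₀ : 0 < K) {p : A → ℝ}
    (hp : (typeClass n p).Nonempty) {R ε : ℝ} (hK : Real.exp (n * R) ≤ K)
    (hsmall : ((Fintype.card A : ℝ) * Fintype.card B) ^ n * Real.exp (-Real.exp (n * ε
      - (1 + Fintype.card A * Fintype.card B) * logSlack n) / 4) < 1 / 2) :
    ∃ C : Fin K → Fin n → A, (∀ m, empPMF (C m) = p) ∧ PopulatesTypes B p R (R - ε) C ∧
      ∑ m, infoSum C m ≤ 2 * ((K : ℝ) ^ 2 * Real.exp ((Fintype.card A * Fintype.card A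
        + (Fintype.card A + Fintype.card A)) * logSlack n)) := by
  classical
  have := hp.to_subtype
  let s : Finset ((Fin n → A) × (Fin n → B)) :=
    Finset.univ.filter fun e => empPMF e.1 = p ∧ mutInf (empJoint e.1 e.2) ≤ R - ε
  have hs : (s.card : ℝ) ≤ ((Fintype.card A : ℝ) * Fintype.card B) ^ n := by
    have hle := Finset.card_le_univ s
    rw [Fintype.card_prod, Fintype.card_fun, Fintype.card_fun, Fintype.card_fin, ← mul_pow] at hle
    exact_mod_cast hle
  obtain ⟨C, hpop, hsum⟩ := exists_code_le_card_and_sum_le (T := typeClass n p) hK₀ s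
    (fun e t => empJoint t.1 e.2 = empJoint e.1 e.2)
    (q := fun e => Real.exp (n * (R - mutInf (empJoint e.1 e.2))
      - (1 + Fintype.card A * Fintype.card B) * logSlack n))
    (q₀ := Real.exp (n * ε - (1 + Fintype.card A * Fintype.card B) * logSlack n))
    (fun e he => by
      have := (Finset.mem_filter.1 he).2.2
      gcongr
      linarith)
    (fun e he => by
      obtain rfl := (Finset.mem_filter.1 he).2.1
      exact exp_mul_card_typeClass_le hK e.1 e.2)
    (lt_of_le_of_lt (by gcongr) hsmall)
    (f := fun t t' => Real.exp (n * mutInf (empJoint t.1 t'.1))) (fun _ _ => (Real.exp_pos _).le)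
    (Real.exp_pos ((Fintype.card A * Fintype.card A
        + (Fintype.card A + Fintype.card A)) * logSlack n))
    (fun t => by
      simp only [empJoint_swap _ t.1, mutInf_comm]
      rw [Finset.sum_coe_sort (typeClass n p) fun x => Real.exp (n * mutInf (empJoint x t.1)),
        Fintype.card_coe]
      exact sum_typeClass_exp_mutInf_le p t.1)
  exact ⟨fun m => C m, fun m => mem_typeClass.1 (C m).2, fun x y hx hxy =>
    hpop (x, y) (Finset.mem_filter.2 ⟨Finset.mem_univ _, hx, hxy⟩), hsum⟩

end ConstantComposition

section Expurgation

variable {A B : Type*} [Fintype A] [Fintype B] [DecidableEq A] [DecidableEq B] {n K M : ℕ}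
  {W : A → B → ℝ} {g : (A → B → ℝ) → ℝ} {QX : A → ℝ} {R : ℝ}

lemma mutInf_le_of_infoSum_le (hn : 0 < n) {C : Fin K → Fin n → A} {m m' : Fin K} (hm' : m' ≠ m)
    {r : ℝ} (h : infoSum C m ≤ Real.exp (n * r)) : mutInf (empJoint (C m) (C m')) ≤ r := by
  have hle : Real.exp (n * mutInf (empJoint (C m) (C m'))) ≤ Real.exp (n * r) :=
    (Finset.single_le_sum (f := fun m' => Real.exp (n * mutInf (empJoint (C m) (C m'))))
      (fun _ _ => (Real.exp_pos _).le) (Finset.mem_filter.2 ⟨Finset.mem_univ m', hm'⟩)).trans h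
  exact le_of_mul_le_mul_left (Real.exp_le_exp.1 hle) (Nat.cast_pos.2 hn)

lemma PopulatesTypes.exp_le_sum_exp {r a η : ℝ} {C : Fin K → Fin n → A}
    (hC : PopulatesTypes B QX R r C) {x : Fin n → A} {y : Fin n → B} (hx : empPMF x = QX)
    (hxy : mutInf (empJoint x y) ≤ r)
    (ha : a ≤ g (empJoint x y) - mutInf (empJoint x y) + R + η)
    (hη : (1 + Fintype.card A * Fintype.card B + 3) * logSlack n ≤ η * n) :
    Real.exp (n * (a - 2 * η)) ≤ ∑ k, Real.exp (n * g (empJoint (C k) y)) := by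
  have hna : n * a ≤ n * (g (empJoint x y) - mutInf (empJoint x y) + R + η) := by gcongr
  have hfour : (4 : ℝ) ≤ Real.exp 3 := by linarith [Real.add_one_le_exp 3]
  calc Real.exp (n * (a - 2 * η))
      ≤ Real.exp (n * (R - mutInf (empJoint x y))
          - (1 + Fintype.card A * Fintype.card B) * logSlack n + n * g (empJoint x y) - 3) := by
        gcongr
        linarith [one_le_logSlack n]
    _ ≤ Real.exp (n * (R - mutInf (empJoint x y))
          - (1 + Fintype.card A * Fintype.card B) * logSlack n) / 4
          * Real.exp (n * g (empJoint x y)) := by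
        rw [Real.exp_sub _ 3, Real.exp_add, div_mul_eq_mul_div]
        gcongr
    _ ≤ (Finset.univ.filter fun i => empJoint (C i) y = empJoint x y).card
          * Real.exp (n * g (empJoint x y)) := by
        gcongr
        exact hC x y hx hxy
    _ = ∑ k ∈ Finset.univ.filter fun i => empJoint (C i) y = empJoint x y,
          Real.exp (n * g (empJoint (C k) y)) := by
        rw [← nsmul_eq_mul, ← Finset.sum_const]
        exact Finset.sum_congr rfl fun k hk => by rw [(Finset.mem_filter.1 hk).2]
    _ ≤ _ := Finset.sum_le_sum_of_subset_of_nonneg (Finset.filter_subset _ _)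
        fun _ _ _ => (Real.exp_pos _).le

lemma Perr_le_exp_of_infoSum_le (hW : IsChannel W) (hn : 0 < n) {C : Fin K → Fin n → A}
    (hC : ∀ m, empPMF (C m) = QX) {α : (B → ℝ) → ℝ}
    (hα : ∀ y : Fin n → B,
      Real.exp (n * α (empPMF y)) ≤ ∑ k, Real.exp (n * g (empJoint (C k) y)))
    {c r : ℝ} (hc : ∀ Q : A → A → B → ℝ, IsJointPMF3 Q → margX (margXX3 Q) = QX →
      margY (margXX3 Q) = QX → mutInf (margXX3 Q) ≤ r →
      c ≤ penalizedObj W g (α (margY3 Q)) Q + mutInf (margXX3 Q))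
    {m : Fin K} (hm : infoSum C m ≤ Real.exp (n * r)) :
    Perr W g C m ≤ Real.exp (-n * (c - r)
      + (Fintype.card A * Fintype.card A * (Fintype.card B + 1)) * logSlack n) := by
  have hpair : ∀ m' ∈ Finset.univ.filter (· ≠ m), ∑ y : Fin n → B, (∏ i, W (C m i) (y i)) *
      Real.exp (-n * max (max (g (empJoint (C m) y)) (α (empPMF y)) - g (empJoint (C m') y)) 0)
      ≤ Real.exp (-n * c + (Fintype.card A * Fintype.card A * (Fintype.card B + 1)) * logSlack n)
        * Real.exp (n * mutInf (empJoint (C m) (C m'))) := fun m' hm' => by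
    refine (sum_prod_mul_exp_penalty_le hW g α (C m) (C m')
      (v := c - mutInf (empJoint (C m) (C m'))) fun y => ?_).trans_eq ?_
    · have hcy := hc (empJoint3 (C m) (C m') y) (isJointPMF3_empJoint3 hn _ _ _)
      rw [margXX3_empJoint3, margX_empJoint, margY_empJoint, margY3_empJoint3] at hcy
      linarith [hcy (hC m) (hC m') (mutInf_le_of_infoSum_le hn (Finset.mem_filter.1 hm').2 hm)]
    · rw [← Real.exp_add]
      congr 1
      ring
  calc Perr W g C m ≤ _ := Perr_le_sum_exp_penalty g hW hα m
    _ ≤ _ := Finset.sum_le_sum hpair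
    _ = Real.exp (-n * c + (Fintype.card A * Fintype.card A * (Fintype.card B + 1)) * logSlack n)
          * infoSum C m := (Finset.mul_sum ..).symm
    _ ≤ Real.exp (-n * c + (Fintype.card A * Fintype.card A * (Fintype.card B + 1)) * logSlack n)
          * Real.exp (n * r) := by gcongr
    _ = _ := by
        rw [← Real.exp_add]
        congr 1
        ring

lemma exists_populatesTypes_and_embedding_infoSum_le (hM : 0 < M)
    (hQX : (typeClass n QX).Nonempty) {ε δ : ℝ} (hle : Real.exp (n * R) ≤ 2 * M)
    (hge : 8 * M ≤ Real.exp (n * R + 11))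
    (hsmall : ((Fintype.card A : ℝ) * Fintype.card B) ^ n * Real.exp (-Real.exp (n * ε
      - (1 + Fintype.card A * Fintype.card B) * logSlack n) / 4) < 1 / 2)
    (hδ : (Fintype.card A * Fintype.card A + (Fintype.card A + Fintype.card A) + 11) * logSlack n
      ≤ δ * n) :
    ∃ C : Fin (2 * M) → Fin n → A, (∀ m, empPMF (C m) = QX) ∧
      PopulatesTypes B QX R (R - ε) C ∧
      ∃ j : Fin M ↪ Fin (2 * M), ∀ i, infoSum C (j i) ≤ Real.exp (n * (R + δ)) := by
  obtain ⟨C, hC, hpop, hsum⟩ := exists_populatesTypes_and_sum_infoSum_le (K := 2 * M) (by omega)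
    hQX (by push_cast; exact hle) hsmall
  set b := (Fintype.card A * Fintype.card A + (Fintype.card A + Fintype.card A)) * logSlack n
  obtain ⟨j, hj⟩ := exists_embedding_forall_le (M := M) (S := infoSum C)
    (v := 8 * M * Real.exp b) (Fintype.card_fin _).ge
    (fun m => Finset.sum_nonneg fun _ _ => (Real.exp_pos _).le) (by positivity)
    (hsum.trans_eq (by push_cast; ring))
  refine ⟨C, hC, hpop, j, fun i => (hj i).trans ?_⟩
  calc 8 * M * Real.exp b ≤ Real.exp (n * R + 11) * Real.exp b := by gcongr
    _ ≤ _ := by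
        rw [← Real.exp_add]
        gcongr
        linarith [one_le_logSlack n]

lemma exists_empPMF_eq (hQX : IsPMF QX) (hn : 0 < n) (h : ∀ a, ∃ k : ℕ, n * QX a = k) :
    ∃ x : Fin n → A, empPMF x = QX := by
  choose k hk using h
  obtain ⟨x, hx⟩ := exists_symbolCount_eq (α := Fin n) k <| by
    rw [Fintype.card_fin, ← Nat.cast_inj (R := ℝ), Nat.cast_sum]
    simp only [← hk, ← Finset.mul_sum, hQX.2, mul_one]
  refine ⟨x, funext fun a => mul_left_cancel₀ (Nat.cast_ne_zero.2 hn.ne' : (n : ℝ) ≠ 0) ?_⟩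
  rw [natCast_mul_empPMF, hx, hk]

lemma exists_code_minimizing_iSup_Perr [Nonempty A] (W : A → B → ℝ) (g : (A → B → ℝ) → ℝ)
    (M n : ℕ) (p : A → ℝ) :
    ∃ C : Fin M → Fin n → A, ∀ C' : Fin M → Fin n → A, (∀ m, empPMF (C' m) = p) →
      (∀ m, empPMF (C m) = p) ∧ ⨆ m, Perr W g C m ≤ ⨆ m, Perr W g C' m := by
  rcases {C : Fin M → Fin n → A | ∀ m, empPMF (C m) = p}.eq_empty_or_nonempty with h | h
  · exact ⟨fun _ _ => Classical.arbitrary A, fun C' hC' => (h.subset hC').elim⟩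
  · obtain ⟨C, hC, hmin⟩ := Set.exists_min_image _ (fun C => ⨆ m, Perr W g C m)
      (Set.toFinite {C : Fin M → Fin n → A | ∀ m, empPMF (C m) = p}) h
    exact ⟨C, fun C' hC' => ⟨hC, hmin C' hC'⟩⟩

end Expurgation

section Asymptotics

open Asymptotics

lemma isLittleO_logSlack : logSlack =o[atTop] fun n : ℕ => (n : ℝ) := by
  have hone : (fun _ : ℝ => (1 : ℝ)) =o[atTop] fun x => x := isLittleO_const_id_atTop 1
  have hlog : (fun x : ℝ => Real.log (x + 1)) =o[atTop] fun x => x :=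
    (Real.isLittleO_log_id_atTop.comp_tendsto
      (tendsto_atTop_add_const_right _ 1 tendsto_id)).trans_isBigO
        ((isBigO_refl _ _).add hone.isBigO)
  exact (hone.add hlog).natCast_atTop

lemma eventually_mul_logSlack_le (D : ℝ) {ε : ℝ} (hε : 0 < ε) :
    ∀ᶠ n : ℕ in atTop, D * logSlack n ≤ ε * n := by
  filter_upwards [(isLittleO_logSlack.const_mul_left D).def hε] with n hn
  exact (le_abs_self _).trans (hn.trans_eq (by rw [Real.norm_natCast]))

lemma eventually_pow_mul_exp_neg_exp_lt {a : ℝ} (ha : 0 ≤ a) (D : ℝ) {ε : ℝ} (hε : 0 < ε) :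
    ∀ᶠ n : ℕ in atTop,
      a ^ n * Real.exp (-Real.exp (n * ε - D * logSlack n) / 4) < 1 / 2 := by
  have hlinear := ((isLittleO_pow_exp_pos_mul_atTop 1 (half_pos hε)).comp_tendsto
    tendsto_natCast_atTop_atTop).def (c := 1 / (4 * (a + 1))) (by positivity)
  filter_upwards [eventually_mul_logSlack_le D (half_pos hε), hlinear, eventually_ge_atTop 1]
    with n hD hn hn₁
  simp only [Function.comp_apply, pow_one, Real.norm_natCast, Real.norm_of_nonneg
    (Real.exp_pos _).le] at hn
  rw [one_div_mul_eq_div, le_div_iff₀ (by positivity)] at hn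
  have hexp : Real.exp (ε / 2 * n) ≤ Real.exp (n * ε - D * logSlack n) := by
    gcongr
    linarith
  have hn₁' : (1 : ℝ) ≤ n := Nat.one_le_cast.2 hn₁
  calc _ ≤ Real.exp (n * a) * Real.exp (-Real.exp (n * ε - D * logSlack n) / 4) := by
        rw [Real.exp_nat_mul]
        gcongr
        linarith [Real.add_one_le_exp a]
    _ ≤ Real.exp (-1) := by
        rw [← Real.exp_add]
        gcongr
        linarith
    _ < 1 / 2 := Real.exp_neg_one_lt_half

lemma exp_le_two_mul_Mn (R : ℝ) (n : ℕ) : Real.exp (n * R) ≤ 2 * Mn R n := by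
  have : Real.exp (n * R) / 2 ≤ Mn R n := Nat.le_ceil _
  linarith

lemma eight_mul_Mn_le {R : ℝ} (hR : 0 ≤ R) (n : ℕ) :
    8 * (Mn R n : ℝ) ≤ Real.exp (n * R + 11) := by
  have hceil : (Mn R n : ℝ) < Real.exp (n * R) / 2 + 1 := Nat.ceil_lt_add_one (by positivity)
  have hone : 1 ≤ Real.exp (n * R) := Real.one_le_exp (by positivity)
  calc 8 * (Mn R n : ℝ) ≤ Real.exp (n * R) * (11 + 1) := by linarith
    _ ≤ Real.exp (n * R) * Real.exp 11 := by
        gcongr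
        exact Real.add_one_le_exp 11
    _ = Real.exp (n * R + 11) := (Real.exp_add _ _).symm

lemma Mn_pos (R : ℝ) (n : ℕ) : 0 < Mn R n := Nat.ceil_pos.2 (by positivity)

lemma tendsto_Mn_atTop {R : ℝ} (hR : 0 < R) : Tendsto (Mn R) atTop atTop :=
  tendsto_nat_ceil_atTop.comp <| (Real.tendsto_exp_atTop.comp <|
    tendsto_natCast_atTop_atTop.atTop_mul_const hR).atTop_div_const two_pos

lemma le_neg_inv_mul_log {n p c : ℝ} (hn : 0 < n) (hp : 0 < p) (h : p ≤ Real.exp (-n * c)) :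
    c ≤ -(1 / n) * Real.log p := by
  rw [neg_mul, one_div, inv_mul_eq_div, le_neg, div_le_iff₀ hn]
  linarith [(Real.log_le_iff_le_exp hp).2 h]

variable {A B : Type*} [Fintype A] [Fintype B] [DecidableEq A] [DecidableEq B]
  {W : A → B → ℝ} {g : (A → B → ℝ) → ℝ} {QX : A → ℝ} {R : ℝ}

lemma eventually_exists_code_Perr_le (hW : IsChannel W)
    (hg : ContinuousOn g {Q : A → B → ℝ | IsJointPMF Q}) (hR : 0 < R) (hQX : IsPMF QX) {c : ℝ}
    (hc : (c : EReal) < EexTilde W g QX R) :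
    ∀ᶠ n : ℕ in atTop, (0 < n ∧ ∀ a, ∃ k : ℕ, (n : ℝ) * QX a = k) →
      ∃ C : Fin (Mn R n) → Fin n → A, (∀ m, empPMF (C m) = QX) ∧
        ∀ m, Perr W g C m ≤ Real.exp (-n * c) := by
  obtain ⟨c', hcc', hc'⟩ := EReal.lt_iff_exists_real_btwn.1 hc
  obtain ⟨η, hη, hη_eq⟩ : ∃ η > 0, c' = c + 5 * η :=
    ⟨(c' - c) / 5, by linarith [EReal.coe_lt_coe_iff.1 hcc'], by ring⟩
  obtain ⟨ε₁, hε₁, hobj⟩ := exists_slack_le_penalizedObj hW hg hR hc' hη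
  obtain ⟨ε₂, hε₂, hdense⟩ := exists_slack_eventually_alphaFun_empPMF_le hg hQX hR hη
  have hδ : 0 < min ε₁ η := lt_min hε₁ hη
  filter_upwards [hdense, eventually_pow_mul_exp_neg_exp_lt
      (mul_nonneg (Nat.cast_nonneg (Fintype.card A)) (Nat.cast_nonneg (Fintype.card B)))
      (1 + Fintype.card A * Fintype.card B) hε₂,
    eventually_mul_logSlack_le (1 + Fintype.card A * Fintype.card B + 3) hη,
    eventually_mul_logSlack_le
      (Fintype.card A * Fintype.card A + (Fintype.card A + Fintype.card A) + 11) hδ,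
    eventually_mul_logSlack_le (Fintype.card A * Fintype.card A * (Fintype.card B + 1)) hη]
    with n hdense hsmall hη_log hδ_log hη_log' ⟨hn, hk⟩
  obtain ⟨x₀, hx₀⟩ := exists_empPMF_eq hQX hn hk
  obtain ⟨C, hC, hpop, j, hj⟩ := exists_populatesTypes_and_embedding_infoSum_le (Mn_pos R n)
    ⟨x₀, mem_typeClass.2 hx₀⟩ (exp_le_two_mul_Mn R n) (eight_mul_Mn_le hR.le n) hsmall hδ_log
  refine ⟨C ∘ j, fun m => hC _, fun m => (Perr_comp_le g hW C j m).trans ?_⟩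
  refine (Perr_le_exp_of_infoSum_le (α := fun q => alphaFun g QX R q - 2 * η)
    (c := c' - 3 * η + R) hW hn hC (fun y => ?_) (fun Q hQ hX hX' hI => ?_) (hj m)).trans ?_
  · obtain ⟨x, hx, hxy, hle⟩ := hdense hk y
    exact hpop.exp_le_sum_exp hx hxy hle hη_log
  · have hpen : penalizedObj W g (alphaFun g QX R (margY3 Q)) Q
        ≤ penalizedObj W g (alphaFun g QX R (margY3 Q) - 2 * η) Q + 2 * η :=
      penalizedObj_le_add (by positivity) (by linarith)
    linarith [hobj Q hQ hX hX' (hI.trans (by gcongr; exact min_le_left _ _))]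
  · have hnδ : n * min ε₁ η ≤ n * η := by gcongr; exact min_le_right _ _
    gcongr
    rw [hη_eq]
    linarith

lemma le_neg_inv_mul_log_iSup_Perr [Nonempty B] (hW : IsChannel W) {n M : ℕ} (hn : 0 < n)
    (hM : 2 ≤ M) {C C' : Fin M → Fin n → A} {c : ℝ}
    (hC : ⨆ m, Perr W g C m ≤ ⨆ m, Perr W g C' m)
    (hC' : ∀ m, Perr W g C' m ≤ Real.exp (-n * c)) :
    c ≤ -(1 / (n : ℝ)) * Real.log (⨆ m, Perr W g C m) := by
  have : Nonempty (Fin M) := ⟨⟨0, by omega⟩⟩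
  have hpos : 0 < ⨆ m, Perr W g C m := (Perr_pos g hM hW C (Classical.arbitrary _)).trans_le
    (le_ciSup (Set.finite_range _).bddAbove _)
  exact le_neg_inv_mul_log (Nat.cast_pos.2 hn) hpos (hC.trans (ciSup_le hC'))

end Asymptotics

/-- **Proposition 1:** there exists a sequence of constant-composition codebooks of
composition `Q_X` and size `⌈e^{nR}/2⌉`, defined for the blocklengths `n` for which the
type class of `Q_X` is nonempty, whose maximal GLD error probability has exponent at
least `Ẽ_ex(R,Q_X)` along those blocklengths. -/
theorem expurgated_code_exists {𝒳 𝒴 : Type*} [Fintype 𝒳] [Fintype 𝒴]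
    [Nonempty 𝒳] [Nonempty 𝒴] [DecidableEq 𝒳] [DecidableEq 𝒴]
    (W : 𝒳 → 𝒴 → ℝ) (hW : IsChannel W)
    (g : (𝒳 → 𝒴 → ℝ) → ℝ) (hg : ContinuousOn g {Q : 𝒳 → 𝒴 → ℝ | IsJointPMF Q})
    (R : ℝ) (hR : 0 < R) (QX : 𝒳 → ℝ) (hQX : IsPMF QX)
    (hrat : ∀ a, ∃ q : ℚ, QX a = (q : ℝ)) :
    ∃ C : (n : ℕ) → Fin (Mn R n) → Fin n → 𝒳,
      (∀ n : ℕ, n ∈ {n : ℕ | 0 < n ∧ ∀ a, ∃ k : ℕ, (n : ℝ) * QX a = (k : ℝ)} →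
        ∀ m, empPMF (C n m) = QX) ∧
      EexTilde W g QX R ≤
        Filter.liminf (fun n : ℕ =>
          ((-(1 / (n : ℝ)) * Real.log (⨆ m, Perr W g (C n) m) : ℝ) : EReal))
          (Filter.atTop ⊓
            Filter.principal {n : ℕ | 0 < n ∧ ∀ a, ∃ k : ℕ, (n : ℝ) * QX a = (k : ℝ)}) := by
  choose C hC using fun n => exists_code_minimizing_iSup_Perr W g (Mn R n) n QX
  refine ⟨C, fun n hn m => ?_, le_of_forall_lt fun c hc => ?_⟩
  · obtain ⟨x, hx⟩ := exists_empPMF_eq hQX hn.1 hn.2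
    exact (hC n (fun _ => x) fun _ => hx).1 m
  obtain ⟨c', hcc', hc'⟩ := EReal.lt_iff_exists_real_btwn.1 hc
  refine hcc'.trans_le (le_liminf_of_le (by isBoundedDefault) (eventually_inf_principal.2 ?_))
  filter_upwards [eventually_exists_code_Perr_le hW hg hR hQX hc',
    (tendsto_Mn_atTop hR).eventually_ge_atTop 2] with n hcode hM hn
  obtain ⟨C', hC', hPerr⟩ := hcode hn
  exact EReal.coe_le_coe_iff.2
    (le_neg_inv_mul_log_iSup_Perr hW hn.1 hM (hC n C' hC').2 hPerr)

end EE
end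

section
/- (Appendix A, evaluation of Ψ) Let W be a channel from 𝒳 to 𝒴 and let Q_{XX'} be a pmf on 𝒳 × 𝒳. For every ρ ≥ 0, the minimum over conditional pmfs Q_{Y|XX'} of { −∑_{x,x',y} Q_{XX'Y}(x,x',y) log W(y|x) − H_Q(Y|X,X') + ρ ( ∑_{x,y} Q_{XY}(x,y) log W(y|x) − ∑_{x',y} Q_{X'Y}(x',y) log W(y|x') ) }, where Q_{XX'Y} = Q_{XX'} · Q_{Y|XX'} and Q_{XY}, Q_{X'Y} are its marginals, equals −∑_{x,x'} Q_{XX'}(x,x') log [ ∑_y W(y|x)^{1−ρ} W(y|x')^{ρ} ]. Consequently, the supremum over ρ ≥ 0 of this minimum equals Ψ(Q_{XX'}). -/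
open Real BigOperators Filter

namespace EE

variable {𝒳 𝒴 : Type*} [Fintype 𝒳] [Fintype 𝒴]

/-!
For a positive weight `w` on a finite set with total mass `Z`, every pmf `q` satisfies
`∑ q log (q / w) = D(q ‖ w / Z) - log Z`. The Lagrangian is the `Q_{XX'}`-average of such sums, with
`w = W(·|x)^(1-ρ) W(·|x')^ρ` and `q = Q_{Y|XX'}(·|x,x')`, so it is a nonnegative average of
divergences plus a constant, and all the divergences vanish together at `Q_{Y|XX'} = w / Z`.
-/

section RelativeEntropy

variable {α : Type*} [Fintype α]

/-- The relative entropy `D(q ‖ w)` of `q` with respect to a weight `w`, which need not be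
normalized. Because `q a / 0 = 0` and `log 0 = 0`, a point where `w` vanishes contributes `0`
rather than `∞`. -/
noncomputable def relEnt (q w : α → ℝ) : ℝ :=
  ∑ a, q a * log (q a / w a)

/-- The Gibbs distribution of a weight `w`; it minimizes `relEnt · w` among pmfs. -/
noncomputable def gibbsPMF (w : α → ℝ) : α → ℝ :=
  fun a => w a / ∑ b, w b

theorem relEnt_self (w : α → ℝ) : relEnt w w = 0 := by
  refine Finset.sum_eq_zero fun a _ => ?_
  rcases eq_or_ne (w a) 0 with ha | ha
  · rw [ha, zero_mul]
  · rw [div_self ha, log_one, mul_zero]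

theorem relEnt_eq_neg_ent_sub {q w : α → ℝ} (hw : ∀ a, w a ≠ 0) :
    relEnt q w = -ent q - ∑ a, q a * log (w a) := by
  rw [ent, neg_neg, ← Finset.sum_sub_distrib]
  refine Finset.sum_congr rfl fun a _ => ?_
  rcases eq_or_ne (q a) 0 with ha | ha
  · simp only [ha, zero_mul, sub_zero]
  · rw [log_div ha (hw a), mul_sub]

theorem sum_sub_sum_le_relEnt {q w : α → ℝ} (hq : ∀ a, 0 ≤ q a) (hw : ∀ a, 0 < w a) :
    ∑ a, q a - ∑ a, w a ≤ relEnt q w := by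
  rw [← Finset.sum_sub_distrib]
  refine Finset.sum_le_sum fun a _ => ?_
  have klFun_scaled : w a * InformationTheory.klFun (q a / w a)
      = q a * log (q a / w a) - (q a - w a) := by
    have weight_ne_zero := (hw a).ne'
    rw [InformationTheory.klFun_apply]
    field_simp
    ring
  have klFun_scaled_nonneg :=
    mul_nonneg (hw a).le (InformationTheory.klFun_nonneg (div_nonneg (hq a) (hw a).le))
  linarith

theorem relEnt_nonneg {q p : α → ℝ} (hq : IsPMF q) (hp : IsPosPMF p) : 0 ≤ relEnt q p := by
  simpa only [hq.2, hp.2, sub_self] using sum_sub_sum_le_relEnt hq.1 hp.1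

theorem IsPosPMF.isPMF {p : α → ℝ} (hp : IsPosPMF p) : IsPMF p :=
  ⟨fun a => (hp.1 a).le, hp.2⟩

theorem isPosPMF_gibbsPMF [Nonempty α] {w : α → ℝ} (hw : ∀ a, 0 < w a) :
    IsPosPMF (gibbsPMF w) := by
  have total_pos : 0 < ∑ a, w a := Finset.sum_pos (fun a _ => hw a) Finset.univ_nonempty
  refine ⟨fun a => div_pos (hw a) total_pos, ?_⟩
  simp only [gibbsPMF, ← Finset.sum_div, div_self total_pos.ne']

theorem relEnt_eq_relEnt_gibbsPMF_sub {w : α → ℝ} (hw : ∀ a, 0 < w a) (q : α → ℝ) :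
    relEnt q w = relEnt q (gibbsPMF w) - (∑ a, q a) * log (∑ a, w a) := by
  rcases isEmpty_or_nonempty α with _ | _
  · simp [relEnt]
  have total_pos : 0 < ∑ a, w a := Finset.sum_pos (fun a _ => hw a) Finset.univ_nonempty
  have log_gibbsPMF (a : α) : log (gibbsPMF w a) = log (w a) - log (∑ b, w b) :=
    log_div (hw a).ne' total_pos.ne'
  rw [relEnt_eq_neg_ent_sub fun a => (hw a).ne',
    relEnt_eq_neg_ent_sub fun a => ((isPosPMF_gibbsPMF hw).1 a).ne']
  simp only [log_gibbsPMF, mul_sub, Finset.sum_sub_distrib, ← Finset.sum_mul]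
  ring

end RelativeEntropy

section GeometricInterpolation

variable {α : Type*} {u v : α → ℝ}

/-- The geometric interpolation `u^(1-ρ) v^ρ` of two weights, formed pointwise; `ρ` may lie outside
`[0, 1]`. -/
noncomputable def geomInterp (ρ : ℝ) (u v : α → ℝ) : α → ℝ :=
  fun a => u a ^ (1 - ρ) * v a ^ ρ

theorem geomInterp_pos (ρ : ℝ) (hu : ∀ a, 0 < u a) (hv : ∀ a, 0 < v a) (a : α) :
    0 < geomInterp ρ u v a :=
  mul_pos (rpow_pos_of_pos (hu a) _) (rpow_pos_of_pos (hv a) _)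

theorem log_geomInterp (ρ : ℝ) (hu : ∀ a, 0 < u a) (hv : ∀ a, 0 < v a) (a : α) :
    log (geomInterp ρ u v a) = (1 - ρ) * log (u a) + ρ * log (v a) := by
  rw [geomInterp, log_mul (rpow_pos_of_pos (hu a) _).ne' (rpow_pos_of_pos (hv a) _).ne',
    log_rpow (hu a), log_rpow (hv a)]

theorem relEnt_geomInterp [Fintype α] (ρ : ℝ) (q : α → ℝ) (hu : ∀ a, 0 < u a)
    (hv : ∀ a, 0 < v a) :
    relEnt q (geomInterp ρ u v)
      = -ent q - ((1 - ρ) * ∑ a, q a * log (u a) + ρ * ∑ a, q a * log (v a)) := by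
  rw [relEnt_eq_neg_ent_sub fun a => (geomInterp_pos ρ hu hv a).ne']
  simp only [log_geomInterp ρ hu hv, mul_add, Finset.sum_add_distrib, Finset.mul_sum,
    mul_left_comm]

end GeometricInterpolation

section Lagrangian

/-- The Lagrangian of the minimization of `obj W` under the constraint
`gML W Q_{XY} ≤ gML W Q_{X'Y}`, with multiplier `ρ`. -/
noncomputable def lagrangian (W : 𝒳 → 𝒴 → ℝ) (ρ : ℝ) (Q : 𝒳 → 𝒳 → 𝒴 → ℝ) : ℝ :=
  obj W Q + ρ * (gML W (margXY3 Q) - gML W (margX'Y3 Q))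

theorem gML_margXY3 (W : 𝒳 → 𝒴 → ℝ) (Q : 𝒳 → 𝒳 → 𝒴 → ℝ) :
    gML W (margXY3 Q) = ∑ x, ∑ x', ∑ y, Q x x' y * log (W x y) := by
  simp only [gML, margXY3, Finset.sum_mul]
  exact Finset.sum_congr rfl fun x _ => Finset.sum_comm

theorem gML_margX'Y3 (W : 𝒳 → 𝒴 → ℝ) (Q : 𝒳 → 𝒳 → 𝒴 → ℝ) :
    gML W (margX'Y3 Q) = ∑ x, ∑ x', ∑ y, Q x x' y * log (W x' y) := by
  simp only [gML, margX'Y3, Finset.sum_mul]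
  rw [Finset.sum_comm (γ := 𝒳) (α := 𝒳)]
  exact Finset.sum_congr rfl fun x' _ => Finset.sum_comm

theorem condEntY3_jointQ (Q : 𝒳 → 𝒳 → ℝ) {Qc : 𝒳 → 𝒳 → 𝒴 → ℝ}
    (hQc : ∀ x x', ∑ y, Qc x x' y = 1) :
    condEntY3 (jointQ Q Qc) = ∑ x, ∑ x', Q x x' * ent (Qc x x') := by
  have cond_term (x x' : 𝒳) (y : 𝒴) :
      Q x x' * Qc x x' y * log (Q x x' * Qc x x' y / Q x x')
        = Q x x' * (Qc x x' y * log (Qc x x' y)) := by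
    rcases eq_or_ne (Q x x') 0 with h | h
    · simp only [h, zero_mul]
    · rw [mul_div_cancel_left₀ _ h, mul_assoc]
  simp only [condEntY3, jointQ, ← Finset.mul_sum, hQc, mul_one, cond_term, ent, mul_neg,
    Finset.sum_neg_distrib]

theorem lagrangian_jointQ {W : 𝒳 → 𝒴 → ℝ} (hW : ∀ x y, 0 < W x y) (ρ : ℝ) (Q : 𝒳 → 𝒳 → ℝ)
    {Qc : 𝒳 → 𝒳 → 𝒴 → ℝ} (hQc : ∀ x x', ∑ y, Qc x x' y = 1) :
    lagrangian W ρ (jointQ Q Qc)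
      = ∑ x, ∑ x', Q x x' * relEnt (Qc x x') (geomInterp ρ (W x) (W x')) := by
  rw [lagrangian, obj, condEntY3_jointQ Q hQc, gML_margXY3, gML_margX'Y3]
  simp only [relEnt_geomInterp ρ _ (hW _) (hW _), jointQ, mul_assoc, ← Finset.mul_sum,
    mul_sub, mul_add, mul_neg, Finset.sum_sub_distrib, Finset.sum_add_distrib,
    Finset.sum_neg_distrib, mul_left_comm _ (1 - ρ), mul_left_comm _ ρ]
  ring

theorem lagrangian_jointQ_eq_sum_relEnt_gibbsPMF_sub {W : 𝒳 → 𝒴 → ℝ}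
    (hW : ∀ x y, 0 < W x y) (ρ : ℝ) (Q : 𝒳 → 𝒳 → ℝ) {Qc : 𝒳 → 𝒳 → 𝒴 → ℝ}
    (hQc : ∀ x x', ∑ y, Qc x x' y = 1) :
    lagrangian W ρ (jointQ Q Qc)
      = ∑ x, ∑ x', Q x x' * relEnt (Qc x x') (gibbsPMF (geomInterp ρ (W x) (W x')))
        - ∑ x, ∑ x', Q x x' * log (∑ y, geomInterp ρ (W x) (W x') y) := by
  simp only [lagrangian_jointQ hW ρ Q hQc, ← Finset.sum_sub_distrib, ← mul_sub,
    relEnt_eq_relEnt_gibbsPMF_sub (geomInterp_pos ρ (hW _) (hW _)), hQc, one_mul]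

end Lagrangian

theorem Psi_evaluation_general [Nonempty 𝒴] {W : 𝒳 → 𝒴 → ℝ} (hW : ∀ x y, 0 < W x y)
    {Q : 𝒳 → 𝒳 → ℝ} (hQ : ∀ x x', 0 ≤ Q x x') (ρ : ℝ) :
    IsLeast {v : ℝ | ∃ Qc : 𝒳 → 𝒳 → 𝒴 → ℝ, (∀ x x', IsPMF (Qc x x')) ∧
        v = lagrangian W ρ (jointQ Q Qc)}
      (-∑ x, ∑ x', Q x x' * log (∑ y, geomInterp ρ (W x) (W x') y)) := by
  have gibbs_pos (x x' : 𝒳) : IsPosPMF (gibbsPMF (geomInterp ρ (W x) (W x'))) :=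
    isPosPMF_gibbsPMF (geomInterp_pos ρ (hW x) (hW x'))
  refine ⟨⟨fun x x' => gibbsPMF (geomInterp ρ (W x) (W x')), fun x x' =>
    (gibbs_pos x x').isPMF, ?_⟩, ?_⟩
  · rw [lagrangian_jointQ_eq_sum_relEnt_gibbsPMF_sub hW ρ Q fun x x' => (gibbs_pos x x').2]
    simp only [relEnt_self, mul_zero, Finset.sum_const_zero, zero_sub]
  · rintro _ ⟨Qc, hQc, rfl⟩
    rw [lagrangian_jointQ_eq_sum_relEnt_gibbsPMF_sub hW ρ Q fun x x' => (hQc x x').2]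
    have avg_nonneg :
        0 ≤ ∑ x, ∑ x', Q x x' * relEnt (Qc x x') (gibbsPMF (geomInterp ρ (W x) (W x'))) :=
      Finset.sum_nonneg fun x _ => Finset.sum_nonneg fun x' _ =>
        mul_nonneg (hQ x x') (relEnt_nonneg (hQc x x') (gibbs_pos x x'))
    linarith

/-- **Appendix A, evaluation of Ψ:** for each `ρ ≥ 0` the inner minimum over conditional
pmfs is `−∑ Q_{XX'}(x,x') log ∑_y W(y|x)^{1−ρ} W(y|x')^ρ`, and taking the supremum over
`ρ ≥ 0` recovers `Ψ(Q_{XX'})`. -/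
theorem Psi_evaluation {𝒳 𝒴 : Type*} [Fintype 𝒳] [Fintype 𝒴]
    [Nonempty 𝒳] [Nonempty 𝒴]
    (W : 𝒳 → 𝒴 → ℝ) (hW : IsChannel W)
    (QXX' : 𝒳 → 𝒳 → ℝ) (hQ : IsJointPMF QXX') :
    (∀ ρ : ℝ, 0 ≤ ρ →
      IsLeast {v : ℝ | ∃ Qc : 𝒳 → 𝒳 → 𝒴 → ℝ, (∀ x x', IsPMF (Qc x x')) ∧
          v = obj W (jointQ QXX' Qc)
              + ρ * (gML W (margXY3 (jointQ QXX' Qc)) - gML W (margX'Y3 (jointQ QXX' Qc)))}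
        (-∑ x, ∑ x', QXX' x x' * Real.log (∑ y, W x y ^ (1 - ρ) * W x' y ^ ρ))) ∧
    (⨆ ρ : {ρ : ℝ // 0 ≤ ρ},
        ((-∑ x, ∑ x', QXX' x x' *
          Real.log (∑ y, W x y ^ (1 - ρ.1) * W x' y ^ ρ.1) : ℝ) : EReal))
      = Psi W QXX' := by
  exact ⟨fun ρ _ => Psi_evaluation_general (fun x => (hW x).1) hQ.1 ρ, rfl⟩

end EE
end

section
/- (Appendix A, Lagrange duality for a) Let W be a channel from 𝒳 to 𝒴, let Q_X be a pmf on 𝒳, let Q_Y be a pmf on 𝒴 and let R ≥ 0. Then a_{g_ML}(R,Q_Y) = inf_{σ ≥ 0} { σ ( R − H(Q_X) ) + max{ ∑_{x,y} Q_{X̃Y}(x,y) log W(y|x) + σ H_Q(X̃|Y) : Q_{X̃Y} a pmf on 𝒳 × 𝒴 with 𝒴-marginal Q_Y and 𝒳-marginal Q_X } }, where H(Q_X) = −∑_x Q_X(x) log Q_X(x). -/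
/-!
The maximum of a concave `g` under `0 ≤ h` with `h` concave equals its Lagrangian dual without any
Slater condition, because the convex set `K` of competitors is compact: if `g < t` on the feasible
part of `K`, each point of `K` satisfies `g + σ h < t` for some `σ ≥ 0`, by compactness finitely
many `σ` suffice, and Sion's minimax theorem merges them into one.

Here `K` is the set of couplings of `Q_X` and `Q_Y` and `h = R - I(X̃;Y)`, which on `K` is a
constant plus `H(X̃,Y)`, hence continuous and concave. The product coupling has `I = 0 ≤ R` and is
therefore feasible, and `I(X̃;Y) = H(Q_X) - H(X̃|Y)` gives the dual the form stated.
-/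

open Real BigOperators Filter

namespace EE

variable {𝒳 𝒴 : Type*} [Fintype 𝒳] [Fintype 𝒴]

section LagrangeDuality

theorem csSup_image_const_add {ι α : Type*} [ConditionallyCompleteLattice α] [AddGroup α]
    [AddLeftMono α] {s : Set ι} {f : ι → α} (hs : s.Nonempty) (hf : BddAbove (f '' s)) (c : α) :
    sSup ((fun i => c + f i) '' s) = c + sSup (f '' s) := by
  simpa only [Set.image_image, OrderIso.addLeft_apply] using
    ((OrderIso.addLeft c).map_csSup' (hs.image f) hf).symm

theorem exists_nonneg_add_mul_lt {a c t : ℝ} (h : 0 ≤ c → a < t) :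
    ∃ σ : ℝ, 0 ≤ σ ∧ a + σ * c < t := by
  rcases le_or_gt 0 c with hc | hc
  · exact ⟨0, le_rfl, by simpa using h hc⟩
  · obtain ⟨n, hn⟩ := exists_nat_gt ((t - a) / c)
    exact ⟨n, n.cast_nonneg, by linarith [(div_lt_iff_of_neg hc).1 hn]⟩

theorem upperSemicontinuousOn_add_mul {X : Type*} [TopologicalSpace X] {K : Set X} {f h : X → ℝ}
    (hf : UpperSemicontinuousOn f K) (hh : UpperSemicontinuousOn h K) {σ : ℝ} (hσ : 0 ≤ σ) :
    UpperSemicontinuousOn (fun x => f x + σ * h x) K :=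
  hf.add <| (continuous_const_mul σ).comp_upperSemicontinuousOn hh (monotone_mul_left_of_nonneg hσ)

variable {E : Type*} [AddCommGroup E] [Module ℝ E] [TopologicalSpace E] [IsTopologicalAddGroup E]
  [ContinuousSMul ℝ E] {K : Set E} {f h : E → ℝ}

theorem exists_add_mul_lt_of_exists_mem_finite (hK : IsCompact K)
    (hfc : UpperSemicontinuousOn f K) (hhc : UpperSemicontinuousOn h K)
    (hf : ConcaveOn ℝ K f) (hh : ConcaveOn ℝ K h) {s : Set ℝ} (hs : s.Finite)
    (hs0 : s ⊆ Set.Ici 0) {t : ℝ} (ht : ∀ x ∈ K, ∃ σ ∈ s, f x + σ * h x < t) :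
    ∃ σ : ℝ, 0 ≤ σ ∧ ∀ x ∈ K, f x + σ * h x < t := by
  rcases K.eq_empty_or_nonempty with rfl | hne
  · exact ⟨0, le_rfl, by simp⟩
  have hlsc : ∀ σ ∈ Set.Ici (0 : ℝ), LowerSemicontinuousOn (fun x => -(f x + σ * h x)) K :=
    fun σ hσ => continuous_neg.comp_upperSemicontinuousOn_antitone
      (upperSemicontinuousOn_add_mul hfc hhc hσ) fun _ _ => neg_le_neg
  have hconvex : ∀ σ ∈ Set.Ici (0 : ℝ), ConvexOn ℝ K fun x => -(f x + σ * h x) :=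
    fun σ hσ => (hf.add (hh.smul hσ)).neg
  have haffine : ∀ x, ConcaveOn ℝ (Set.Ici 0) fun σ : ℝ => -(f x + σ * h x) := fun x =>
    ⟨convex_Ici 0, fun σ _ τ _ a b _ _ hab => le_of_eq <| by
      simp only [smul_eq_mul]; linear_combination (-f x) * hab⟩
  obtain ⟨σ, hσ, hlt⟩ := Sion.exists_lt_iInf_of_lt_iInf_of_finite hne hK hlsc
    (fun σ hσ => (hconvex σ hσ).quasiconvexOn) (convex_Ici 0)
    (fun x _ => Continuous.upperSemicontinuous (by fun_prop) |>.upperSemicontinuousOn _)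
    (fun x _ => (haffine x).quasiconcaveOn) hf.1 hs hs0 (t := -t)
    (fun x hx => by simpa only [neg_lt_neg_iff] using ht x hx)
  exact ⟨σ, hσ, fun x hx => neg_lt_neg_iff.1 (hlt x hx)⟩

theorem exists_lagrange_multiplier (hK : IsCompact K)
    (hfc : UpperSemicontinuousOn f K) (hhc : UpperSemicontinuousOn h K)
    (hf : ConcaveOn ℝ K f) (hh : ConcaveOn ℝ K h) {t : ℝ} (ht : ∀ x ∈ K, 0 ≤ h x → f x < t) :
    ∃ σ : ℝ, 0 ≤ σ ∧ ∀ x ∈ K, f x + σ * h x < t := by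
  have hpt : ∀ x ∈ K, ∃ σ : ℝ, 0 ≤ σ ∧ f x + σ * h x < t := fun x hx =>
    exists_nonneg_add_mul_lt (ht x hx)
  choose! m hm0 hmt using hpt
  obtain ⟨s, hsK, hs⟩ := hK.elim_nhdsWithin_subcover (fun x => {z | f z + m x * h z < t})
    fun x hx => upperSemicontinuousOn_add_mul hfc hhc (hm0 x hx) x hx t (hmt x hx)
  exact exists_add_mul_lt_of_exists_mem_finite hK hfc hhc hf hh (s.finite_toSet.image m)
    (Set.image_subset_iff.2 fun x hx => hm0 x (hsK x hx)) fun x hx => by simpa using hs hx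

theorem sSup_image_sep_nonneg_eq_sInf_lagrangian (hK : IsCompact K)
    (hfc : UpperSemicontinuousOn f K) (hhc : UpperSemicontinuousOn h K)
    (hf : ConcaveOn ℝ K f) (hh : ConcaveOn ℝ K h) (hfeas : ∃ x ∈ K, 0 ≤ h x) :
    sSup (f '' {x ∈ K | 0 ≤ h x}) =
      sInf ((fun σ => sSup ((fun x => f x + σ * h x) '' K)) '' Set.Ici 0) := by
  have hweak : ∀ x ∈ K, 0 ≤ h x → ∀ σ ∈ Set.Ici (0 : ℝ),
      f x ≤ sSup ((fun x => f x + σ * h x) '' K) := fun x hx hhx σ hσ =>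
    (le_add_of_nonneg_right (mul_nonneg hσ hhx)).trans <| le_csSup
      ((upperSemicontinuousOn_add_mul hfc hhc hσ).bddAbove_of_isCompact hK) ⟨x, hx, rfl⟩
  obtain ⟨x₀, hx₀, hhx₀⟩ := hfeas
  apply le_antisymm
  · refine csSup_le ⟨_, x₀, ⟨hx₀, hhx₀⟩, rfl⟩ (Set.forall_mem_image.2 fun x hx => ?_)
    exact le_csInf (Set.nonempty_Ici.image _) (Set.forall_mem_image.2 (hweak x hx.1 hx.2))
  · refine le_of_forall_gt_imp_ge_of_dense fun t ht => ?_
    have hbdd : BddAbove (f '' {x ∈ K | 0 ≤ h x}) :=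
      (hfc.bddAbove_of_isCompact hK).mono (Set.image_mono (Set.sep_subset _ _))
    obtain ⟨σ, hσ, hσt⟩ := exists_lagrange_multiplier hK hfc hhc hf hh
      fun x hx hhx => (le_csSup hbdd ⟨x, ⟨hx, hhx⟩, rfl⟩).trans_lt ht
    calc sInf ((fun σ => sSup ((fun x => f x + σ * h x) '' K)) '' Set.Ici 0)
        ≤ sSup ((fun x => f x + σ * h x) '' K) :=
          csInf_le ⟨f x₀, Set.forall_mem_image.2 (hweak x₀ hx₀ hhx₀)⟩ ⟨σ, hσ, rfl⟩
      _ ≤ t := csSup_le ⟨_, x₀, hx₀, rfl⟩ (Set.forall_mem_image.2 fun x hx => (hσt x hx).le)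

end LagrangeDuality

section Marginals

omit [Fintype 𝒳] in
theorem isLinearMap_margX : IsLinearMap ℝ (margX : (𝒳 → 𝒴 → ℝ) → 𝒳 → ℝ) :=
  ⟨fun P Q => funext fun x => by simp [margX, Finset.sum_add_distrib],
    fun c Q => funext fun x => by simp [margX, Finset.mul_sum]⟩

omit [Fintype 𝒴] in
theorem isLinearMap_margY : IsLinearMap ℝ (margY : (𝒳 → 𝒴 → ℝ) → 𝒴 → ℝ) :=
  ⟨fun P Q => funext fun y => by simp [margY, Finset.sum_add_distrib],
    fun c Q => funext fun y => by simp [margY, Finset.mul_sum]⟩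

omit [Fintype 𝒳] in
theorem continuous_margX : Continuous (margX : (𝒳 → 𝒴 → ℝ) → 𝒳 → ℝ) := by
  unfold margX; fun_prop

omit [Fintype 𝒴] in
theorem continuous_margY : Continuous (margY : (𝒳 → 𝒴 → ℝ) → 𝒴 → ℝ) := by
  unfold margY; fun_prop

variable {Q : 𝒳 → 𝒴 → ℝ}

omit [Fintype 𝒳] in
theorem le_margX (hQ : 0 ≤ Q) (x : 𝒳) (y : 𝒴) : Q x y ≤ margX Q x :=
  Finset.single_le_sum (fun y _ => hQ x y) (Finset.mem_univ y)

omit [Fintype 𝒴] in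
theorem le_margY (hQ : 0 ≤ Q) (x : 𝒳) (y : 𝒴) : Q x y ≤ margY Q y :=
  Finset.single_le_sum (f := fun x => Q x y) (fun x _ => hQ x y) (Finset.mem_univ x)

end Marginals

section Entropy

/-- The joint entropy `H_Q(X,Y)` of a joint pmf `Q` on `𝒳 × 𝒴`, in curried form. -/
noncomputable def jointEnt (Q : 𝒳 → 𝒴 → ℝ) : ℝ := ∑ x, ∑ y, negMulLog (Q x y)

theorem continuous_jointEnt : Continuous (jointEnt : (𝒳 → 𝒴 → ℝ) → ℝ) := by
  unfold jointEnt; fun_prop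

theorem concaveOn_jointEnt : ConcaveOn ℝ (Set.Ici (0 : 𝒳 → 𝒴 → ℝ)) jointEnt := by
  refine ⟨convex_Ici 0, fun P hP Q hQ a b ha hb hab => ?_⟩
  simp only [jointEnt, smul_eq_mul, Finset.mul_sum, ← Finset.sum_add_distrib]
  exact Finset.sum_le_sum fun x _ => Finset.sum_le_sum fun y _ =>
    concaveOn_negMulLog.2 (hP x y) (hQ x y) ha hb hab

theorem ent_margX (Q : 𝒳 → 𝒴 → ℝ) : ent (margX Q) = -∑ x, ∑ y, Q x y * log (margX Q x) := by
  simp only [ent, ← Finset.sum_mul, margX]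

theorem ent_margY (Q : 𝒳 → 𝒴 → ℝ) : ent (margY Q) = -∑ x, ∑ y, Q x y * log (margY Q y) := by
  rw [Finset.sum_comm]
  simp only [ent, ← Finset.sum_mul, margY]

variable {Q : 𝒳 → 𝒴 → ℝ}

theorem condEntXY_eq_jointEnt_sub_ent (hQ : 0 ≤ Q) :
    condEntXY Q = jointEnt Q - ent (margY Q) := by
  simp only [condEntXY, jointEnt, ent_margY, ← Finset.sum_neg_distrib, ← Finset.sum_sub_distrib]
  refine Finset.sum_congr rfl fun x _ => Finset.sum_congr rfl fun y _ => ?_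
  rcases (hQ x y).eq_or_lt' with hxy | hxy
  · simp [hxy]
  · have hy := hxy.trans_le (le_margY hQ x y)
    rw [log_div hxy.ne' hy.ne', negMulLog]; ring

theorem mutInf_eq_ent_sub_condEntXY (hQ : 0 ≤ Q) : mutInf Q = ent (margX Q) - condEntXY Q := by
  simp only [mutInf, condEntXY, ent_margX, ← Finset.sum_neg_distrib, ← Finset.sum_sub_distrib]
  refine Finset.sum_congr rfl fun x _ => Finset.sum_congr rfl fun y _ => ?_
  rcases (hQ x y).eq_or_lt' with hxy | hxy
  · simp [hxy]
  · have hx := hxy.trans_le (le_margX hQ x y)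
    have hy := hxy.trans_le (le_margY hQ x y)
    rw [log_div hxy.ne' (mul_pos hx hy).ne', log_mul hx.ne' hy.ne', log_div hxy.ne' hy.ne']; ring

end Entropy

section Couplings

/-- The couplings of `QX` and `QY`, i.e. the joint pmfs on `𝒳 × 𝒴` with these marginals: the set
over which both the primal and the dual problem optimize. -/
def couplings (QX : 𝒳 → ℝ) (QY : 𝒴 → ℝ) : Set (𝒳 → 𝒴 → ℝ) :=
  {Q | IsJointPMF Q ∧ margX Q = QX ∧ margY Q = QY}

variable {QX : 𝒳 → ℝ} {QY : 𝒴 → ℝ} {Q : 𝒳 → 𝒴 → ℝ}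

theorem couplings_eq_inter (hQX : IsPMF QX) :
    couplings QX QY = Set.Ici 0 ∩ ({Q | margX Q = QX} ∩ {Q | margY Q = QY}) := by
  ext Q
  refine ⟨fun hQ => ⟨hQ.1.1, hQ.2⟩, fun hQ => ⟨⟨hQ.1, ?_⟩, hQ.2⟩⟩
  rw [← hQX.2, ← hQ.2.1]
  rfl

theorem convex_couplings (hQX : IsPMF QX) : Convex ℝ (couplings QX QY) := by
  rw [couplings_eq_inter hQX]
  exact (convex_Ici 0).inter
    ((convex_hyperplane isLinearMap_margX QX).inter (convex_hyperplane isLinearMap_margY QY))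

theorem isCompact_couplings (hQX : IsPMF QX) : IsCompact (couplings QX QY) := by
  have hclosed : IsClosed (couplings QX QY) := by
    rw [couplings_eq_inter hQX]
    exact isClosed_Ici.inter ((isClosed_eq continuous_margX continuous_const).inter
      (isClosed_eq continuous_margY continuous_const))
  refine (isCompact_Icc (a := 0) (b := fun x _ => QX x)).of_isClosed_subset hclosed ?_
  rintro Q ⟨⟨hQ, -⟩, rfl, -⟩
  exact ⟨hQ, le_margX hQ⟩

theorem condEntXY_eq_of_mem_couplings (hQ : Q ∈ couplings QX QY) :
    condEntXY Q = jointEnt Q - ent QY := by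
  rw [condEntXY_eq_jointEnt_sub_ent hQ.1.1, hQ.2.2]

theorem mutInf_eq_of_mem_couplings (hQ : Q ∈ couplings QX QY) :
    mutInf Q = ent QX + ent QY - jointEnt Q := by
  rw [mutInf_eq_ent_sub_condEntXY hQ.1.1, condEntXY_eq_of_mem_couplings hQ, hQ.2.1]
  ring

theorem continuousOn_condEntXY_couplings : ContinuousOn condEntXY (couplings QX QY) :=
  (continuous_jointEnt.sub continuous_const).continuousOn.congr
    fun _ => condEntXY_eq_of_mem_couplings

theorem continuousOn_mutInf_couplings : ContinuousOn mutInf (couplings QX QY) :=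
  (continuous_const.sub continuous_jointEnt).continuousOn.congr fun _ => mutInf_eq_of_mem_couplings

theorem convexOn_mutInf_couplings (hQX : IsPMF QX) : ConvexOn ℝ (couplings QX QY) mutInf :=
  ((convexOn_const _ (convex_couplings hQX)).sub
    (concaveOn_jointEnt.subset (fun _ hQ => hQ.1.1) (convex_couplings hQX))).congr
    fun _ hQ => (mutInf_eq_of_mem_couplings hQ).symm

theorem mul_mem_couplings (hQX : IsPMF QX) (hQY : IsPMF QY) :
    (fun x y => QX x * QY y) ∈ couplings QX QY := by
  refine ⟨⟨fun x y => mul_nonneg (hQX.1 x) (hQY.1 y), ?_⟩, funext fun x => ?_, funext fun y => ?_⟩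
  · simp [← Finset.mul_sum, hQX.2, hQY.2]
  · simp [margX, ← Finset.mul_sum, hQY.2]
  · simp [margY, ← Finset.sum_mul, hQX.2]

theorem mutInf_mul_eq_zero (hQX : IsPMF QX) (hQY : IsPMF QY) :
    mutInf (fun x y => QX x * QY y) = 0 := by
  obtain ⟨-, hX, hY⟩ := mul_mem_couplings hQX hQY
  rw [mutInf, hX, hY]
  refine Finset.sum_eq_zero fun x _ => Finset.sum_eq_zero fun y _ => ?_
  rcases eq_or_ne (QX x * QY y) 0 with h | h <;> simp [h]

end Couplings

section Metrics

theorem isLinearMap_gML (W : 𝒳 → 𝒴 → ℝ) : IsLinearMap ℝ (gML W) :=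
  ⟨fun P Q => by simp [gML, add_mul, Finset.sum_add_distrib],
    fun c Q => by simp [gML, Finset.mul_sum, mul_assoc]⟩

theorem continuous_gML (W : 𝒳 → 𝒴 → ℝ) : Continuous (gML W) := by
  unfold gML; fun_prop

theorem concaveOn_gML (W : 𝒳 → 𝒴 → ℝ) {K : Set (𝒳 → 𝒴 → ℝ)} (hK : Convex ℝ K) :
    ConcaveOn ℝ K (gML W) :=
  ((isLinearMap_gML W).mk' _).concaveOn hK

theorem aFun_eq_sSup_image (g : (𝒳 → 𝒴 → ℝ) → ℝ) (QX : 𝒳 → ℝ) (R : ℝ) (QY : 𝒴 → ℝ) :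
    aFun g QX R QY = sSup (g '' {Q ∈ couplings QX QY | 0 ≤ R - mutInf Q}) := by
  simp only [aFun, couplings, Set.image, Set.mem_ofPred_eq, sub_nonneg, and_assoc, eq_comm]

theorem sSup_lagrangian_eq_add_sSup_condEntXY {g : (𝒳 → 𝒴 → ℝ) → ℝ} {QX : 𝒳 → ℝ} {QY : 𝒴 → ℝ}
    (hQX : IsPMF QX) (hQY : IsPMF QY) (hg : UpperSemicontinuousOn g (couplings QX QY))
    (R : ℝ) {σ : ℝ} (hσ : 0 ≤ σ) :
    sSup ((fun Q => g Q + σ * (R - mutInf Q)) '' couplings QX QY) =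
      σ * (R - ent QX) + sSup ((fun Q => g Q + σ * condEntXY Q) '' couplings QX QY) := by
  have hbdd : BddAbove ((fun Q => g Q + σ * condEntXY Q) '' couplings QX QY) :=
    (upperSemicontinuousOn_add_mul hg continuousOn_condEntXY_couplings.upperSemicontinuousOn
      hσ).bddAbove_of_isCompact (isCompact_couplings hQX)
  rw [← csSup_image_const_add ⟨_, mul_mem_couplings hQX hQY⟩ hbdd]
  refine congrArg sSup (Set.image_congr fun Q hQ => ?_)
  rw [mutInf_eq_ent_sub_condEntXY hQ.1.1, hQ.2.1]
  ring

end Metrics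

theorem aML_duality_general {g : (𝒳 → 𝒴 → ℝ) → ℝ} {QX : 𝒳 → ℝ} (hQX : IsPMF QX) {QY : 𝒴 → ℝ}
    (hQY : IsPMF QY) (hgc : UpperSemicontinuousOn g (couplings QX QY))
    (hg : ConcaveOn ℝ (couplings QX QY) g) {R : ℝ} (hR : 0 ≤ R) :
    aFun g QX R QY =
      sInf {v : ℝ | ∃ σ : ℝ, 0 ≤ σ ∧
        v = σ * (R - ent QX) +
          sSup {w : ℝ | ∃ Q : 𝒳 → 𝒴 → ℝ, IsJointPMF Q ∧ margX Q = QX ∧ margY Q = QY ∧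
            w = g Q + σ * condEntXY Q}} := by
  have hfeas : ∃ Q ∈ couplings QX QY, 0 ≤ R - mutInf Q :=
    ⟨_, mul_mem_couplings hQX hQY, by rwa [mutInf_mul_eq_zero hQX hQY, sub_zero]⟩
  have hc : UpperSemicontinuousOn (fun Q => R - mutInf Q) (couplings QX QY) :=
    (continuousOn_const.sub continuousOn_mutInf_couplings).upperSemicontinuousOn
  have hconcave : ConcaveOn ℝ (couplings QX QY) fun Q => R - mutInf Q :=
    (concaveOn_const R (convex_couplings hQX)).sub (convexOn_mutInf_couplings hQX)
  rw [aFun_eq_sSup_image,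
    sSup_image_sep_nonneg_eq_sInf_lagrangian (isCompact_couplings hQX) hgc hc hg hconcave hfeas,
    Set.image_congr (s := Set.Ici 0) fun _ hσ =>
      sSup_lagrangian_eq_add_sSup_condEntXY hQX hQY hgc R hσ]
  simp only [couplings, Set.image, Set.mem_ofPred_eq, Set.mem_Ici, and_assoc, eq_comm]

/-- **Appendix A, Lagrange duality for `a`:** `a_{g_ML}(R,Q_Y)` equals the infimum over
`σ ≥ 0` of `σ(R − H(Q_X))` plus the maximum of `g_ML(Q_{X̃Y}) + σ H_Q(X̃|Y)` over joint
pmfs with the prescribed marginals. -/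
theorem aML_duality {𝒳 𝒴 : Type*} [Fintype 𝒳] [Fintype 𝒴]
    [Nonempty 𝒳] [Nonempty 𝒴]
    (W : 𝒳 → 𝒴 → ℝ) (hW : IsChannel W)
    (QX : 𝒳 → ℝ) (hQX : IsPMF QX) (QY : 𝒴 → ℝ) (hQY : IsPMF QY) (R : ℝ) (hR : 0 ≤ R) :
    aFun (gML W) QX R QY =
      sInf {v : ℝ | ∃ σ : ℝ, 0 ≤ σ ∧
        v = σ * (R - ent QX) +
          sSup {w : ℝ | ∃ Q : 𝒳 → 𝒴 → ℝ, IsJointPMF Q ∧ margX Q = QX ∧ margY Q = QY ∧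
            w = gML W Q + σ * condEntXY Q}} :=
  aML_duality_general hQX hQY (continuous_gML W).continuousOn.upperSemicontinuousOn
    (concaveOn_gML W (convex_couplings hQX)) hR

end EE
end
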